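/- arXiv:2405.14914 — 3 statements merged into one kernel-verified Lean document; each statement's English description precedes it below -/
import Mathlib

section
/- Let K be an algebraically closed field of characteristic zero, Q a finite quiver and d ∈ ℕ^{Q₀} ∖ {0} such that (Q,d) has property (P). Then there exist matrices x_a ∈ M_{d_{t(a)} × d_{s(a)}}(K) and y_a ∈ M_{d_{s(a)} × d_{t(a)}}(K) (a ∈ Q₁) with Σ_{a : t(a)=i} x_a y_a − Σ_{a : s(a)=i} y_a x_a = 0 for every vertex i, such that the only families of subspaces (W_i ⊆ K^{d_i})_{i∈Q₀} satisfying x_a(W_{s(a)}) ⊆ W_{t(a)} and y_a(W_{t(a)}) ⊆ W_{s(a)} for all a ∈ Q₁ are W_i = 0 for all i and W_i = K^{d_i} for all i. (That is, there exists a simple module over the preprojective algebra Π_Q of dimension vector d.) -/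
/-- A finite quiver (equivalently, a finite multigraph with a chosen orientation of each
edge): finitely many vertices and arrows, with source and target maps. -/
structure FinQuiver where
  V : Type
  E : Type
  [fintypeV : Fintype V]
  [fintypeE : Fintype E]
  [decEqV : DecidableEq V]
  s : E → V
  t : E → V

attribute [instance] FinQuiver.fintypeV FinQuiver.fintypeE FinQuiver.decEqV

namespace FinQuiver

/-- The adjacency (simple) graph of the underlying multigraph: two vertices are adjacent
if some edge joins them.  Connectivity of the multigraph only depends on this graph. -/
def adjGraph (G : FinQuiver) : SimpleGraph G.V :=
  SimpleGraph.fromRel fun a b => ∃ e : G.E, G.s e = a ∧ G.t e = b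

/-- The number of connected components of the underlying multigraph. -/
noncomputable def c (G : FinQuiver) : ℕ :=
  Nat.card G.adjGraph.ConnectedComponent

/-- The Betti number `b(Q) = c(Q) - #Q₀ + #Q₁` of the underlying multigraph. -/
noncomputable def betti (G : FinQuiver) : ℤ :=
  (G.c : ℤ) - Fintype.card G.V + Fintype.card G.E

/-- The underlying multigraph is connected. -/
def Connected (G : FinQuiver) : Prop := G.adjGraph.Connected

/-- Deletion of the edge `e`. -/
noncomputable def deleteEdge (G : FinQuiver) (e : G.E) : FinQuiver :=
  letI : DecidableEq G.E := Classical.decEq _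
  { V := G.V, E := {e' : G.E // e' ≠ e}, s := fun e' => G.s e'.1, t := fun e' => G.t e'.1 }

/-- The underlying multigraph is 2-connected: it is connected and stays connected after
deleting any single edge. -/
def TwoConnected (G : FinQuiver) : Prop :=
  G.Connected ∧ ∀ e : G.E, (G.deleteEdge e).Connected

/-- Restriction `Q|_I` to a subset `I` of the vertices (full sub(multi)graph). -/
noncomputable def restrictV (G : FinQuiver) (I : Set G.V) : FinQuiver :=
  letI : DecidablePred (· ∈ I) := Classical.decPred _
  { V := ↥I
    E := {e : G.E // G.s e ∈ I ∧ G.t e ∈ I}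
    s := fun e => ⟨G.s e.1, e.2.1⟩
    t := fun e => ⟨G.t e.1, e.2.2⟩ }

/-- Restriction `Q|_J` to a subset `J` of the edges (keeping all vertices). -/
noncomputable def restrictE (G : FinQuiver) (J : Set G.E) : FinQuiver :=
  letI : DecidablePred (· ∈ J) := Classical.decPred _
  { V := G.V
    E := ↥J
    s := fun e => G.s e.1
    t := fun e => G.t e.1 }

end FinQuiver
/-- A locally free representation of rank `r` of the quiver `G` over `R`: a matrix
`x_a` of size `r_{t(a)} × r_{s(a)}` for every arrow `a`. -/
abbrev QRep (G : FinQuiver) (R : Type) [CommRing R] (r : G.V → ℕ) : Type :=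
  ∀ a : G.E, Matrix (Fin (r (G.t a))) (Fin (r (G.s a))) R

/-- The second component of a pair in the doubled quiver: a matrix `y_a` of size
`r_{s(a)} × r_{t(a)}` for every arrow `a`. -/
abbrev QCoRep (G : FinQuiver) (R : Type) [CommRing R] (r : G.V → ℕ) : Type :=
  ∀ a : G.E, Matrix (Fin (r (G.s a))) (Fin (r (G.t a))) R

/-- The moment map of the quiver `G`:
`μ(x,y)_i := Σ_{a : t(a)=i} x_a y_a − Σ_{a : s(a)=i} y_a x_a`. -/
noncomputable def momentMap (G : FinQuiver) {R : Type} [CommRing R] {r : G.V → ℕ}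
    (x : QRep G R r) (y : QCoRep G R r) (i : G.V) : Matrix (Fin (r i)) (Fin (r i)) R :=
  (∑ a : G.E, if h : G.t a = i then
      cast (congrArg (fun v => Matrix (Fin (r v)) (Fin (r v)) R) h) (x a * y a) else 0)
  - ∑ a : G.E, if h : G.s a = i then
      cast (congrArg (fun v => Matrix (Fin (r v)) (Fin (r v)) R) h) (y a * x a) else 0

/-- The Euler form `⟨r,r'⟩ := Σ_{i∈Q₀} r_i r'_i − Σ_{a∈Q₁} r_{s(a)} r'_{t(a)}` of `G`. -/
def eulerForm (G : FinQuiver) (r r' : G.V → ℕ) : ℤ :=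
  ∑ i : G.V, (r i : ℤ) * (r' i : ℤ) - ∑ a : G.E, (r (G.s a) : ℤ) * (r' (G.t a) : ℤ)

/-- The change-of-basis action of `GL_{α,r} = ∏_i GL_{r_i}(R)` on representations:
`(g·x)_a := g_{t(a)} x_a g_{s(a)}⁻¹`. -/
def glAct (G : FinQuiver) {R : Type} [CommRing R] {r : G.V → ℕ}
    (g : ∀ i : G.V, (Matrix (Fin (r i)) (Fin (r i)) R)ˣ) (x : QRep G R r) : QRep G R r :=
  fun a => (g (G.t a) : Matrix (Fin (r (G.t a))) (Fin (r (G.t a))) R) * x a *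
    (((g (G.s a))⁻¹ : (Matrix (Fin (r (G.s a))) (Fin (r (G.s a))) R)ˣ) :
      Matrix (Fin (r (G.s a))) (Fin (r (G.s a))) R)

/-- `A` is block-diagonal for the splittings `m = m' + (m − m')`, `n = n' + (n − n')`:
all entries `A k l` with `(k < m') ↮ (l < n')` vanish. -/
def IsBlockDiag {R : Type} [CommRing R] {m n : ℕ} (m' n' : ℕ)
    (A : Matrix (Fin m) (Fin n) R) : Prop :=
  ∀ (k : Fin m) (l : Fin n), ¬ ((k : ℕ) < m' ↔ (l : ℕ) < n') → A k l = 0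

/-- `r'` is the rank vector of a direct summand of the representation `x`: for some
complementary rank vector `r''` with `r' + r'' = r`, some change of basis `g` makes all
matrices of `x` block-diagonal with diagonal blocks of sizes prescribed by `r'`, `r''`.
(In particular `r' = 0` and `r' = r` always qualify.) -/
def IsSummandRank (G : FinQuiver) {R : Type} [CommRing R] {r : G.V → ℕ}
    (x : QRep G R r) (r' : G.V → ℕ) : Prop :=
  ∃ r'' : G.V → ℕ, (∀ i, r' i + r'' i = r i) ∧
    ∃ g : ∀ i : G.V, (Matrix (Fin (r i)) (Fin (r i)) R)ˣ,
      ∀ a : G.E, IsBlockDiag (r' (G.t a)) (r' (G.s a)) (glAct G g x a)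

/-- `x` is decomposable: it is a direct sum of two representations of nonzero ranks. -/
def Decomposable (G : FinQuiver) {R : Type} [CommRing R] {r : G.V → ℕ}
    (x : QRep G R r) : Prop :=
  ∃ r' r'' : G.V → ℕ, (∀ i, r' i + r'' i = r i) ∧ r' ≠ 0 ∧ r'' ≠ 0 ∧
    ∃ g : ∀ i : G.V, (Matrix (Fin (r i)) (Fin (r i)) R)ˣ,
      ∀ a : G.E, IsBlockDiag (r' (G.t a)) (r' (G.s a)) (glAct G g x a)
/-- `Q` is totally negative: every vertex carries at least two loops, and every pair of
distinct vertices is joined by at least one arrow. -/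
def TotallyNegative (G : FinQuiver) : Prop :=
  (∀ i : G.V, 2 ≤ (Finset.univ.filter fun a : G.E => G.s a = i ∧ G.t a = i).card) ∧
  (∀ i j : G.V, i ≠ j → ∃ a : G.E, (G.s a = i ∧ G.t a = j) ∨ (G.s a = j ∧ G.t a = i))

/-- `(Q,d)` has property (P): `Q` is totally negative, and it is not the case that the
support of `d` consists of exactly two vertices `i ≠ j` joined by exactly one arrow of
`Q` with `d_i = d_j = 1`. -/
def PropertyP (G : FinQuiver) (d : G.V → ℕ) : Prop :=
  TotallyNegative G ∧
  ¬ ∃ i j : G.V, i ≠ j ∧ {v : G.V | d v ≠ 0} = ({i, j} : Set G.V) ∧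
      (Finset.univ.filter fun a : G.E =>
        (G.s a = i ∧ G.t a = j) ∨ (G.s a = j ∧ G.t a = i)).card = 1 ∧
      d i = 1 ∧ d j = 1

/-!
Assemble a pair `(x, y)` into matrices on the total space `⨁ v, K ^ d v`: the moment map collects
the diagonal blocks of `∑ a, [x a, y a]`, and `(x, y)` is simple as soon as these matrices generate
the full matrix algebra. Giving the two loops at each vertex the values `E₀₀` and a cyclic
permutation matrix produces all matrix units of the diagonal blocks, so it is enough that the
nonzero blocks between different vertices connect the support of `d` strongly.

If the support does not consist of two vertices, orient one arrow for each step of a cyclic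
permutation of it, and put all-ones blocks in these directions only: one of `x a`, `y a` is always
zero, so every commutator vanishes. The same works for two vertices joined by two arrows. For two
vertices and a single arrow, this arrow must be used in both directions; if one of the two
dimensions is at least `2`, its commutator can be made `±E₁₀` at that vertex, which is cancelled by
a commutator at a loop.
-/

open Matrix

theorem forall_mem_of_isCycleOn {ι : Type*} {σ : Equiv.Perm ι} {s : Finset ι}
    (hσ : σ.IsCycleOn s) {p : ι → Prop} {i : ι} (hi : i ∈ s) (hpi : p i)
    (hstep : ∀ j ∈ s, p j → p (σ j)) :
    ∀ j ∈ s, p j := by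
  have hpow : ∀ n : ℕ, (σ ^ n) i ∈ s ∧ p ((σ ^ n) i) := by
    intro n
    induction n with
    | zero => exact ⟨hi, hpi⟩
    | succ n ih =>
      rw [pow_succ', Equiv.Perm.mul_apply]
      exact ⟨hσ.1.mapsTo ih.1, hstep _ ih.1 ih.2⟩
  intro j hj
  obtain ⟨n, -, rfl⟩ := hσ.exists_pow_eq hi hj
  exact (hpow n).2

section MatrixAlgebra

variable {ι R K : Type*} [Fintype ι] [CommSemiring R] [Field K]

theorem eq_bot_or_eq_top_of_forall_mulVec_mem {W : Submodule K (ι → K)}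
    (hW : ∀ M : Matrix ι ι K, ∀ w ∈ W, M *ᵥ w ∈ W) : W = ⊥ ∨ W = ⊤ := by
  classical
  refine or_iff_not_imp_left.2 fun hne => eq_top_iff.2 fun v _ => ?_
  obtain ⟨w, hw, hw0⟩ := W.ne_bot_iff.1 hne
  obtain ⟨k, hk : w k ≠ 0⟩ := Function.ne_iff.1 hw0
  have hv : vecMulVec v (Pi.single k (w k)⁻¹) *ᵥ w = v := by
    rw [vecMulVec_mulVec, single_dotProduct, inv_mul_cancel₀ hk, MulOpposite.op_one, one_smul]
  exact hv ▸ hW _ w hw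

variable [DecidableEq ι]

theorem mulVec_mem_of_mem_adjoin {S : Set (Matrix ι ι R)} {W : Submodule R (ι → R)}
    (hS : ∀ M ∈ S, ∀ w ∈ W, M *ᵥ w ∈ W) {M : Matrix ι ι R} (hM : M ∈ Algebra.adjoin R S) :
    ∀ w ∈ W, M *ᵥ w ∈ W := by
  induction hM using Algebra.adjoin_induction with
  | mem M hM => exact hS M hM
  | algebraMap c =>
    intro w hw
    rw [Algebra.algebraMap_eq_smul_one, smul_mulVec, one_mulVec]
    exact W.smul_mem c hw
  | add M N _ _ hM hN =>
    intro w hw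
    rw [add_mulVec]
    exact W.add_mem (hM w hw) (hN w hw)
  | mul M N _ _ hM hN =>
    intro w hw
    rw [← mulVec_mulVec]
    exact hM _ (hN w hw)

theorem eq_bot_or_eq_top_of_adjoin_eq_top {S : Set (Matrix ι ι K)}
    (hS : Algebra.adjoin K S = ⊤) {W : Submodule K (ι → K)}
    (hW : ∀ M ∈ S, ∀ w ∈ W, M *ᵥ w ∈ W) : W = ⊥ ∨ W = ⊤ :=
  eq_bot_or_eq_top_of_forall_mulVec_mem fun M =>
    mulVec_mem_of_mem_adjoin hW (hS ▸ Algebra.mem_top : M ∈ Algebra.adjoin K S)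

theorem single_mem_of_apply_ne_zero {A : Subalgebra K (Matrix ι ι K)} {M : Matrix ι ι K}
    {i j : ι} (hi : single i i 1 ∈ A) (hj : single j j 1 ∈ A) (hM : M ∈ A) (hij : M i j ≠ 0) :
    single i j 1 ∈ A := by
  have h : single i j (M i j) ∈ A := by
    simpa only [single_mul_mul_single, one_mul, mul_one] using A.mul_mem (A.mul_mem hi hM) hj
  simpa only [smul_single, smul_eq_mul, inv_mul_cancel₀ hij] using A.smul_mem h (M i j)⁻¹

theorem subalgebra_eq_top_of_forall_single_mem {A : Subalgebra R (Matrix ι ι R)}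
    (hA : ∀ i j, single i j 1 ∈ A) : A = ⊤ := by
  refine eq_top_iff.2 fun M _ => ?_
  rw [matrix_eq_sum_single M]
  refine A.sum_mem fun i _ => A.sum_mem fun j _ => ?_
  simpa only [smul_single, smul_eq_mul, mul_one] using A.smul_mem (hA i j) (M i j)

theorem subalgebra_eq_top_of_reflTransGen {A : Subalgebra K (Matrix ι ι K)}
    (hdiag : ∀ i, single i i 1 ∈ A)
    (hconn : ∀ i j, Relation.ReflTransGen (fun i j => ∃ M ∈ A, M j i ≠ 0) i j) : A = ⊤ := by
  refine subalgebra_eq_top_of_forall_single_mem fun j i => ?_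
  induction hconn i j with
  | refl => exact hdiag i
  | @tail k l _ hkl hki =>
    obtain ⟨M, hM, hlk⟩ := hkl
    have hlk := single_mem_of_apply_ne_zero (hdiag l) (hdiag k) hM hlk
    simpa only [single_mul_single_same, mul_one] using A.mul_mem hlk hki

/-- The matrix sending the basis vector `e_j` to `e_{σ j}` for `j ∈ s`, and to `0` otherwise. -/
def partialPermMatrix (R : Type*) [Zero R] [One R] (σ : Equiv.Perm ι) (s : Finset ι) :
    Matrix ι ι R :=
  of fun i j => if j ∈ s ∧ σ j = i then 1 else 0

theorem partialPermMatrix_mul_single (σ : Equiv.Perm ι) {s : Finset ι} {j : ι} (hj : j ∈ s)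
    (k : ι) : partialPermMatrix R σ s * single j k 1 = single (σ j) k 1 := by
  ext i l
  by_cases hl : l = k
  · subst hl
    simp [partialPermMatrix, hj, single_apply]
  · simp [hl, Ne.symm hl]

theorem single_mul_partialPermMatrix (σ : Equiv.Perm ι) {s : Finset ι} {j : ι} (hj : j ∈ s)
    (k : ι) : single k (σ j) 1 * partialPermMatrix R σ s = single k j 1 := by
  ext i l
  by_cases hi : i = k
  · subst hi
    by_cases hl : l = j
    · subst hl
      simp [partialPermMatrix, hj]
    · simp [partialPermMatrix, hl, Ne.symm hl]
  · simp [hi, Ne.symm hi]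

theorem single_mem_of_partialPermMatrix_mem {A : Subalgebra R (Matrix ι ι R)}
    {σ : Equiv.Perm ι} {s : Finset ι} (hσ : σ.IsCycleOn s) (hA : partialPermMatrix R σ s ∈ A)
    {k : ι} (hk : k ∈ s) (hkk : single k k 1 ∈ A) : ∀ i ∈ s, ∀ j ∈ s, single i j 1 ∈ A := by
  have hcol : ∀ i ∈ s, single i k 1 ∈ A :=
    forall_mem_of_isCycleOn hσ hk hkk fun i hi hik => by
      simpa only [partialPermMatrix_mul_single σ hi] using A.mul_mem hA hik
  have hmaps : ∀ j ∈ s, σ⁻¹ j ∈ s := fun j hj => hσ.inv.1.mapsTo hj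
  intro i hi
  refine forall_mem_of_isCycleOn hσ.inv hk (hcol i hi) fun j hj hij => ?_
  have hσj : σ (σ⁻¹ j) = j := σ.apply_symm_apply j
  rw [← single_mul_partialPermMatrix σ (hmaps j hj), hσj]
  exact A.mul_mem hij hA

end MatrixAlgebra

section Block

variable {V R K : Type*} {β : V → Type*} {i j : V}

/-- `M`, acting on `⨁ v, R ^ β v`, has all its nonzero entries in the block
`R ^ β j → R ^ β i`. -/
def IsBlock [Zero R] (i j : V) (M : Matrix (Σ v, β v) (Σ v, β v) R) : Prop :=
  ∀ b c, M b c ≠ 0 → b.1 = i ∧ c.1 = j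

/-- The matrix with all entries `1` in the block `R ^ β j → R ^ β i` and `0` elsewhere. -/
def onesBlock (R : Type*) [Zero R] [One R] [DecidableEq V] (i j : V) :
    Matrix (Σ v, β v) (Σ v, β v) R :=
  of fun b c => if b.1 = i ∧ c.1 = j then 1 else 0

theorem isBlock_zero [Zero R] : IsBlock i j (0 : Matrix (Σ v, β v) (Σ v, β v) R) :=
  fun _ _ h => absurd rfl h

theorem isBlock_single [Zero R] [DecidableEq (Σ v, β v)] {b c : Σ v, β v} (hb : b.1 = i)
    (hc : c.1 = j) (r : R) : IsBlock i j (single b c r) := by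
  intro b' c' h
  obtain ⟨rfl, rfl⟩ : b = b' ∧ c = c' := by
    by_contra hne
    exact h (single_apply_of_ne _ _ _ _ _ hne)
  exact ⟨hb, hc⟩

theorem isBlock_onesBlock [Zero R] [One R] [DecidableEq V] :
    IsBlock i j (onesBlock R i j : Matrix (Σ v, β v) (Σ v, β v) R) :=
  fun _ _ h => by_contra fun hne => h (if_neg hne)

theorem onesBlock_ne_zero [Zero R] [One R] [NeZero (1 : R)] [DecidableEq V] [Nonempty (β i)]
    [Nonempty (β j)] :
    (onesBlock R i j : Matrix (Σ v, β v) (Σ v, β v) R) ≠ 0 := by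
  inhabit β i
  inhabit β j
  intro h
  simpa [onesBlock] using congrFun₂ h ⟨i, default⟩ ⟨j, default⟩

namespace IsBlock

variable {M : Matrix (Σ v, β v) (Σ v, β v) R}

theorem apply_eq_zero_left [Zero R] (hM : IsBlock i j M) {b c : Σ v, β v} (hb : b.1 ≠ i) :
    M b c = 0 :=
  by_contra fun h => hb (hM b c h).1

theorem apply_eq_zero_right [Zero R] (hM : IsBlock i j M) {b c : Σ v, β v} (hc : c.1 ≠ j) :
    M b c = 0 :=
  by_contra fun h => hc (hM b c h).2

variable [NonUnitalNonAssocSemiring R] [Fintype V] [∀ v, Fintype (β v)]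

theorem sum_mul (hM : IsBlock i j M) (b : Σ v, β v) (w : (Σ v, β v) → R) :
    ∑ c, M b c * w c = ∑ q : β j, M b ⟨j, q⟩ * w ⟨j, q⟩ := by
  rw [Fintype.sum_sigma]
  refine Fintype.sum_eq_single j fun v hv => Finset.sum_eq_zero fun q _ => ?_
  rw [hM.apply_eq_zero_right hv, zero_mul]

theorem mulVec_comp_mk (hM : IsBlock i j M) (w : (Σ v, β v) → R) :
    (M *ᵥ w) ∘ Sigma.mk i = M.submatrix (Sigma.mk i) (Sigma.mk j) *ᵥ (w ∘ Sigma.mk j) :=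
  funext fun p => hM.sum_mul ⟨i, p⟩ w

theorem mulVec_comp_mk_of_ne (hM : IsBlock i j M) (w : (Σ v, β v) → R) {v : V} (hv : v ≠ i) :
    (M *ᵥ w) ∘ Sigma.mk v = 0 :=
  funext fun _ => Finset.sum_eq_zero fun _ _ =>
    mul_eq_zero_of_left (hM.apply_eq_zero_left hv) _

theorem submatrix_mul_submatrix (hM : IsBlock i j M) (N : Matrix (Σ v, β v) (Σ v, β v) R)
    (u v : V) :
    M.submatrix (Sigma.mk u) (Sigma.mk j) * N.submatrix (Sigma.mk j) (Sigma.mk v) =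
      (M * N).submatrix (Sigma.mk u) (Sigma.mk v) :=
  Matrix.ext fun p q => (hM.sum_mul ⟨u, p⟩ fun c => N c ⟨v, q⟩).symm

theorem submatrix_mul_of_ne (hM : IsBlock i j M) (N : Matrix (Σ v, β v) (Σ v, β v) R)
    {u : V} (hu : u ≠ i) (v : V) : (M * N).submatrix (Sigma.mk u) (Sigma.mk v) = 0 :=
  Matrix.ext fun _ _ => Finset.sum_eq_zero fun _ _ =>
    mul_eq_zero_of_left (hM.apply_eq_zero_left hu) _

end IsBlock

/-- The submodule `⨁ v, W v` of `⨁ v, R ^ β v`, for a family of submodules `W v ⊆ R ^ β v`. -/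
def totalSubmodule [Semiring R] (W : ∀ v, Submodule R (β v → R)) : Submodule R ((Σ v, β v) → R) :=
  ⨅ v, (W v).comap (LinearMap.funLeft R R (Sigma.mk v))

theorem mem_totalSubmodule [Semiring R] {W : ∀ v, Submodule R (β v → R)} {w : (Σ v, β v) → R} :
    w ∈ totalSubmodule W ↔ ∀ v, w ∘ Sigma.mk v ∈ W v :=
  Submodule.mem_iInf _

theorem eq_top_of_totalSubmodule_eq_top [Semiring R] {W : ∀ v, Submodule R (β v → R)}
    (hW : totalSubmodule W = ⊤) (v : V) : W v = ⊤ := by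
  refine eq_top_iff.2 fun w _ => ?_
  have hw : Function.extend (Sigma.mk v) w 0 ∈ totalSubmodule W := hW ▸ Submodule.mem_top
  simpa only [Function.extend_comp sigma_mk_injective] using mem_totalSubmodule.1 hw v

theorem eq_bot_of_totalSubmodule_eq_bot [Semiring R] {W : ∀ v, Submodule R (β v → R)}
    (hW : totalSubmodule W = ⊥) (v : V) : W v = ⊥ := by
  refine (Submodule.eq_bot_iff _).2 fun w hw => ?_
  have hext : Function.extend (Sigma.mk v) w 0 ∈ totalSubmodule W := by
    refine mem_totalSubmodule.2 fun u => ?_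
    by_cases hu : u = v
    · subst hu
      rwa [Function.extend_comp sigma_mk_injective]
    · convert (W u).zero_mem
      funext p
      exact Function.extend_apply' _ _ _ fun ⟨_, h⟩ => hu (congrArg Sigma.fst h).symm
  rw [hW, Submodule.mem_bot] at hext
  rw [← Function.extend_comp sigma_mk_injective w 0, hext, Pi.zero_comp]

theorem IsBlock.mulVec_mem_totalSubmodule [Semiring R] [Fintype V] [∀ v, Fintype (β v)]
    {M : Matrix (Σ v, β v) (Σ v, β v) R} (hM : IsBlock i j M) {W : ∀ v, Submodule R (β v → R)}
    (hW : ∀ w ∈ W j, M.submatrix (Sigma.mk i) (Sigma.mk j) *ᵥ w ∈ W i) :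
    ∀ w ∈ totalSubmodule W, M *ᵥ w ∈ totalSubmodule W := by
  refine fun w hw => mem_totalSubmodule.2 fun v => ?_
  by_cases hv : v = i
  · subst hv
    rw [hM.mulVec_comp_mk]
    exact hW _ (mem_totalSubmodule.1 hw j)
  · rw [hM.mulVec_comp_mk_of_ne w hv]
    exact (W v).zero_mem

theorem adjoin_eq_top_of_reflTransGen_fst [Field K] [Fintype V] [∀ v, Fintype (β v)]
    [DecidableEq (Σ v, β v)] {S : Set (Matrix (Σ v, β v) (Σ v, β v) K)}
    (hdiag : ∀ b c : Σ v, β v, b.1 = c.1 → single b c 1 ∈ Algebra.adjoin K S)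
    (hconn : ∀ b c : Σ v, β v,
      Relation.ReflTransGen (fun u v => ∃ M ∈ S, IsBlock v u M ∧ M ≠ 0) b.1 c.1) :
    Algebra.adjoin K S = ⊤ := by
  refine subalgebra_eq_top_of_reflTransGen (fun b => hdiag b b rfl) fun b c => ?_
  have hfibre : ∀ b c : Σ v, β v, b.1 = c.1 → ∃ M ∈ Algebra.adjoin K S, M c b ≠ 0 :=
    fun b c h => ⟨_, hdiag c b h.symm, by rw [single_apply_same]; exact one_ne_zero⟩
  have hreach : ∀ v, Relation.ReflTransGen (fun u v => ∃ M ∈ S, IsBlock v u M ∧ M ≠ 0) b.1 v →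
      ∀ c : Σ v, β v, c.1 = v →
        Relation.ReflTransGen (fun b c => ∃ M ∈ Algebra.adjoin K S, M c b ≠ 0) b c := by
    intro v hv
    induction hv with
    | refl => exact fun c hc => .single (hfibre b c hc.symm)
    | @tail u v _ huv ih =>
      obtain ⟨M, hMS, hM, hM0⟩ := huv
      obtain ⟨b₁, b₂, hb⟩ : ∃ b₁ b₂, M b₁ b₂ ≠ 0 := by
        by_contra! h
        exact hM0 (Matrix.ext h)
      intro c hc
      refine ((ih b₂ (hM _ _ hb).2).tail ⟨M, Algebra.subset_adjoin hMS, hb⟩).tail ?_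
      exact hfibre b₁ c ((hM _ _ hb).1.trans hc.symm)
  exact hreach c.1 (hconn b c) c rfl

end Block

theorem cast_submatrix_mk {V α : Type*} {β : V → Type*} (M : Matrix (Σ v, β v) (Σ v, β v) α)
    {u v : V} (h : u = v) :
    cast (congrArg (fun v => Matrix (β v) (β v) α) h) (M.submatrix (Sigma.mk u) (Sigma.mk u)) =
      M.submatrix (Sigma.mk v) (Sigma.mk v) := by
  subst h
  rfl

theorem exists_isBlock_generators (R : Type*) [CommSemiring R] {V : Type*} [Fintype V]
    [DecidableEq V] (d : V → ℕ) (v : V) :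
    ∃ P Q : Matrix (Σ v, Fin (d v)) (Σ v, Fin (d v)) R, IsBlock v v P ∧ IsBlock v v Q ∧
      (∀ b : Σ v, Fin (d v), b.1 = v → (b.2 : ℕ) = 0 → P = single b b 1) ∧
      ∀ A : Subalgebra R (Matrix (Σ v, Fin (d v)) (Σ v, Fin (d v)) R), P ∈ A → Q ∈ A →
        ∀ b c : Σ v, Fin (d v), b.1 = v → c.1 = v → single b c 1 ∈ A := by
  let s : Finset (Σ v, Fin (d v)) := {b | b.1 = v}
  have hs : ∀ b, b ∈ s ↔ b.1 = v := fun b => by simp [s]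
  obtain ⟨σ, hσ, -⟩ := s.exists_cycleOn
  have hQ : IsBlock v v (partialPermMatrix R σ s) := by
    intro b c h
    obtain ⟨hc, rfl⟩ : c ∈ s ∧ σ c = b := by_contra fun hne => h (if_neg hne)
    exact ⟨(hs _).1 (hσ.1.mapsTo hc), (hs c).1 hc⟩
  by_cases hv : d v = 0
  · have hempty : ∀ b : Σ v, Fin (d v), b.1 ≠ v := fun b hb => b.2.pos.ne' (hb ▸ hv)
    exact ⟨0, _, isBlock_zero, hQ, fun b hb => absurd hb (hempty b),
      fun _ _ _ b _ hb => absurd hb (hempty b)⟩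
  · let o : Σ v, Fin (d v) := ⟨v, 0, Nat.pos_of_ne_zero hv⟩
    refine ⟨single o o 1, _, isBlock_single rfl rfl 1, hQ, ?_, fun A hP hQ b c hb hc =>
      single_mem_of_partialPermMatrix_mem hσ hQ ((hs o).2 rfl) hP b ((hs b).2 hb) c ((hs c).2 hc)⟩
    intro b hb hb0
    obtain rfl : b = o := Sigma.ext hb ((Fin.heq_ext_iff (congrArg d hb)).2 hb0)
    rfl

theorem reflTransGen_of_eq_or_eq {α : Type*} {r : α → α → Prop} {i j u w : α}
    (hij : r i j) (hji : r j i) (hu : u = i ∨ u = j) (hw : w = i ∨ w = j) :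
    Relation.ReflTransGen r u w := by
  rcases hu with rfl | rfl <;> rcases hw with rfl | rfl
  exacts [.refl, .single hij, .single hji, .refl]

namespace FinQuiver

variable {G : FinQuiver} {d : G.V → ℕ} {R K : Type} [CommRing R] [Field K]

/-- There are `x`, `y` with `μ(x, y) = 0` and no invariant families of subspaces besides the zero
and the full one. For `d ≠ 0` this says that the preprojective algebra of `G` has a simple module
of dimension vector `d`; it holds trivially for `d = 0`. -/
def HasSimpleModule (G : FinQuiver) (d : G.V → ℕ) (K : Type) [Field K] : Prop :=
  ∃ (x : QRep G K d) (y : QCoRep G K d),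
    (∀ i : G.V, momentMap G x y i = 0) ∧
    ∀ W : (i : G.V) → Submodule K (Fin (d i) → K),
      (∀ a : G.E, ∀ v ∈ W (G.s a), (x a).mulVec v ∈ W (G.t a)) →
      (∀ a : G.E, ∀ v ∈ W (G.t a), (y a).mulVec v ∈ W (G.s a)) →
      (∀ i : G.V, W i = ⊥) ∨ (∀ i : G.V, W i = ⊤)

/-- Matrices acting on the total space `⨁ v, R ^ d v` of a representation of dimension
vector `d`. -/
abbrev TotalMatrix (d : G.V → ℕ) (R : Type) : Type :=
  Matrix (Σ v, Fin (d v)) (Σ v, Fin (d v)) R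

/-- The representation whose matrices are the blocks `R ^ d (s a) → R ^ d (t a)` of the total
matrices `X a`. -/
def blockRep (X : G.E → TotalMatrix d R) : QRep G R d :=
  fun a => (X a).submatrix (fun p => ⟨G.t a, p⟩) fun q => ⟨G.s a, q⟩

/-- The opposite counterpart of `blockRep`, with the blocks `R ^ d (t a) → R ^ d (s a)` of the
total matrices `Y a`. -/
def blockCoRep (Y : G.E → TotalMatrix d R) : QCoRep G R d :=
  fun a => (Y a).submatrix (fun p => ⟨G.s a, p⟩) fun q => ⟨G.t a, q⟩

theorem momentMap_block {X Y : G.E → TotalMatrix d R}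
    (hX : ∀ a, IsBlock (G.t a) (G.s a) (X a)) (hY : ∀ a, IsBlock (G.s a) (G.t a) (Y a))
    (v : G.V) :
    momentMap G (blockRep X) (blockCoRep Y) v =
      (∑ a, (X a * Y a - Y a * X a)).submatrix (Sigma.mk v) (Sigma.mk v) := by
  have hsum : ∀ f : G.E → TotalMatrix d R,
      (∑ a, f a).submatrix (Sigma.mk v) (Sigma.mk v) =
        ∑ a, (f a).submatrix (Sigma.mk v) (Sigma.mk v) := fun f => by
    ext p q
    simp only [submatrix_apply, Matrix.sum_apply]
  rw [Finset.sum_sub_distrib, submatrix_sub, Pi.sub_apply, Pi.sub_apply, hsum, hsum, momentMap]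
  congr 1 <;> refine Finset.sum_congr rfl fun a _ => ?_
  · split_ifs with h
    · rw [blockRep, blockCoRep, (hX a).submatrix_mul_submatrix, cast_submatrix_mk _ h]
    · rw [(hX a).submatrix_mul_of_ne _ (Ne.symm h)]
  · split_ifs with h
    · rw [blockRep, blockCoRep, (hY a).submatrix_mul_submatrix, cast_submatrix_mk _ h]
    · rw [(hY a).submatrix_mul_of_ne _ (Ne.symm h)]

theorem hasSimpleModule_of_adjoin_eq_top {X Y : G.E → TotalMatrix d K}
    (hX : ∀ a, IsBlock (G.t a) (G.s a) (X a)) (hY : ∀ a, IsBlock (G.s a) (G.t a) (Y a))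
    (hcomm : ∑ a, (X a * Y a - Y a * X a) = 0)
    (hgen : Algebra.adjoin K (Set.range X ∪ Set.range Y) = ⊤) : HasSimpleModule G d K := by
  refine ⟨blockRep X, blockCoRep Y, fun v => ?_, fun W hWX hWY => ?_⟩
  · rw [momentMap_block hX hY, hcomm, submatrix_zero]
    rfl
  · have hW : ∀ M ∈ Set.range X ∪ Set.range Y, ∀ w ∈ totalSubmodule W,
        M *ᵥ w ∈ totalSubmodule W := by
      rintro _ (⟨a, rfl⟩ | ⟨a, rfl⟩)
      · exact (hX a).mulVec_mem_totalSubmodule (hWX a)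
      · exact (hY a).mulVec_mem_totalSubmodule (hWY a)
    exact (eq_bot_or_eq_top_of_adjoin_eq_top hgen hW).imp eq_bot_of_totalSubmodule_eq_bot
      eq_top_of_totalSubmodule_eq_top

/-- Some nonzero `X a` or `Y a` goes from the summand of the vertex `u` to that of `v`. -/
def Link (X Y : G.E → TotalMatrix d R) (u v : G.V) : Prop :=
  ∃ a, (G.s a = u ∧ G.t a = v ∧ X a ≠ 0) ∨ (G.t a = u ∧ G.s a = v ∧ Y a ≠ 0)

theorem hasSimpleModule_of_link {X Y : G.E → TotalMatrix d K}
    (hX : ∀ a, IsBlock (G.t a) (G.s a) (X a)) (hY : ∀ a, IsBlock (G.s a) (G.t a) (Y a))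
    (hcomm : ∑ a, (X a * Y a - Y a * X a) = 0)
    (hunits : ∀ b c : Σ v, Fin (d v), b.1 = c.1 →
      single b c 1 ∈ Algebra.adjoin K (Set.range X))
    (hlink : ∀ u v, d u ≠ 0 → d v ≠ 0 → Relation.ReflTransGen (Link X Y) u v) :
    HasSimpleModule G d K := by
  refine hasSimpleModule_of_adjoin_eq_top hX hY hcomm <|
    adjoin_eq_top_of_reflTransGen_fst
      (fun b c h => Algebra.adjoin_mono Set.subset_union_left (hunits b c h)) fun b c =>
    Relation.ReflTransGen.mono ?_ _ _ (hlink b.1 c.1 b.2.pos.ne' c.2.pos.ne')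
  rintro _ _ ⟨a, ⟨rfl, rfl, ha⟩ | ⟨rfl, rfl, ha⟩⟩
  · exact ⟨X a, .inl ⟨a, rfl⟩, hX a, ha⟩
  · exact ⟨Y a, .inr ⟨a, rfl⟩, hY a, ha⟩

theorem exists_extension_to_loops (hG : TotallyNegative G) {L : G.E → TotalMatrix d R}
    (hL : ∀ a, IsBlock (G.t a) (G.s a) (L a)) :
    ∃ X : G.E → TotalMatrix d R, (∀ a, IsBlock (G.t a) (G.s a) (X a)) ∧
      (∀ a, G.s a ≠ G.t a → X a = L a) ∧
      (∀ b : Σ v, Fin (d v), (b.2 : ℕ) = 0 →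
        ∃ e, G.s e = b.1 ∧ G.t e = b.1 ∧ X e = single b b 1) ∧
      ∀ b c : Σ v, Fin (d v), b.1 = c.1 → single b c 1 ∈ Algebra.adjoin R (Set.range X) := by
  classical
  have hloops : ∀ v, ∃ a b : G.E, (G.s a = v ∧ G.t a = v) ∧ (G.s b = v ∧ G.t b = v) ∧ a ≠ b := by
    intro v
    obtain ⟨a, ha, b, hb, hab⟩ := Finset.one_lt_card.1 (hG.1 v)
    exact ⟨a, b, (Finset.mem_filter.1 ha).2, (Finset.mem_filter.1 hb).2, hab⟩
  choose l₁ l₂ hl₁ hl₂ hne using hloops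
  choose P Q hP hQ hP₀ hPQ using exists_isBlock_generators R d
  let X : G.E → TotalMatrix d R := fun a =>
    if a = l₁ (G.s a) then P (G.s a) else if a = l₂ (G.s a) then Q (G.s a) else L a
  have hX₁ : ∀ v, X (l₁ v) = P v := fun v => by simp [X, (hl₁ v).1]
  have hX₂ : ∀ v, X (l₂ v) = Q v := fun v => by simp [X, (hl₂ v).1, (hne v).symm]
  have hloop₁ : ∀ a, a = l₁ (G.s a) → G.t a = G.s a := fun a ha => by
    rw [ha, (hl₁ _).1, (hl₁ _).2]
  have hloop₂ : ∀ a, a = l₂ (G.s a) → G.t a = G.s a := fun a ha => by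
    rw [ha, (hl₂ _).1, (hl₂ _).2]
  refine ⟨X, fun a => ?_, fun a ha => ?_, fun b hb => ?_, fun b c hbc => ?_⟩
  · dsimp only [X]
    split_ifs with h₁ h₂
    · rw [hloop₁ a h₁]
      exact hP _
    · rw [hloop₂ a h₂]
      exact hQ _
    · exact hL a
  · dsimp only [X]
    rw [if_neg fun h => ha (hloop₁ a h).symm, if_neg fun h => ha (hloop₂ a h).symm]
  · exact ⟨l₁ b.1, (hl₁ _).1, (hl₁ _).2, by rw [hX₁, hP₀ b.1 b rfl hb]⟩
  · have hP_mem : P c.1 ∈ Set.range X := ⟨l₁ c.1, hX₁ c.1⟩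
    have hQ_mem : Q c.1 ∈ Set.range X := ⟨l₂ c.1, hX₂ c.1⟩
    exact hPQ c.1 _ (Algebra.subset_adjoin hP_mem) (Algebra.subset_adjoin hQ_mem) b c hbc rfl

/-- A step between distinct vertices of the support of `d` along some arrow, where the arrows in
`F` are traversed forwards and all other arrows backwards. -/
def OrientedStep (d : G.V → ℕ) (F : Set G.E) (u v : G.V) : Prop :=
  d u ≠ 0 ∧ d v ≠ 0 ∧ u ≠ v ∧
    ∃ a, (a ∈ F ∧ G.s a = u ∧ G.t a = v) ∨ (a ∉ F ∧ G.s a = v ∧ G.t a = u)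

theorem hasSimpleModule_of_orientation (hG : TotallyNegative G) (F : Set G.E)
    (hF : ∀ u v, d u ≠ 0 → d v ≠ 0 → Relation.ReflTransGen (OrientedStep d F) u v) :
    HasSimpleModule G d K := by
  classical
  let L : G.E → TotalMatrix d K := fun a => if a ∈ F then onesBlock K (G.t a) (G.s a) else 0
  let Y : G.E → TotalMatrix d K := fun a =>
    if a ∈ F ∨ G.s a = G.t a then 0 else onesBlock K (G.s a) (G.t a)
  have hL : ∀ a, IsBlock (G.t a) (G.s a) (L a) := fun a => by
    dsimp only [L]
    split_ifs
    exacts [isBlock_onesBlock, isBlock_zero]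
  have hY : ∀ a, IsBlock (G.s a) (G.t a) (Y a) := fun a => by
    dsimp only [Y]
    split_ifs
    exacts [isBlock_zero, isBlock_onesBlock]
  obtain ⟨X, hX, hXL, -, hunits⟩ := exists_extension_to_loops hG hL
  have hXY : ∀ a, X a = 0 ∨ Y a = 0 := fun a => by
    by_cases ha : a ∈ F ∨ G.s a = G.t a
    · exact .inr (if_pos ha)
    · push Not at ha
      exact .inl ((hXL a ha.2).trans (if_neg ha.1))
  refine hasSimpleModule_of_link hX hY (Finset.sum_eq_zero fun a _ => ?_) hunits
    fun u v hu hv => Relation.ReflTransGen.mono ?_ _ _ (hF u v hu hv)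
  · rcases hXY a with h | h <;> simp only [h, zero_mul, mul_zero, sub_zero]
  · rintro _ _ ⟨hu, hv, huv, a, ⟨ha, rfl, rfl⟩ | ⟨ha, rfl, rfl⟩⟩ <;>
      have := Fin.pos_iff_nonempty.1 (Nat.pos_of_ne_zero hu) <;>
      have := Fin.pos_iff_nonempty.1 (Nat.pos_of_ne_zero hv)
    · refine ⟨a, .inl ⟨rfl, rfl, ?_⟩⟩
      rw [hXL a huv, show L a = _ from if_pos ha]
      exact onesBlock_ne_zero
    · refine ⟨a, .inr ⟨rfl, rfl, ?_⟩⟩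
      rw [show Y a = _ from if_neg (not_or.2 ⟨ha, huv.symm⟩)]
      exact onesBlock_ne_zero

theorem hasSimpleModule_of_card_support_ne_two (hG : TotallyNegative G)
    (hcard : (Finset.univ.filter fun v => d v ≠ 0).card ≠ 2) : HasSimpleModule G d K := by
  obtain ⟨σ, hσ, -⟩ := (Finset.univ.filter fun v => d v ≠ 0).exists_cycleOn
  have hmem : ∀ v, v ∈ Finset.univ.filter (fun v => d v ≠ 0) ↔ d v ≠ 0 := fun v => by simp
  have hσd : ∀ v, d v ≠ 0 → d (σ v) ≠ 0 := fun v hv =>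
    (hmem _).1 (hσ.1.mapsTo ((hmem v).2 hv))
  have hσσ : ∀ v, d v ≠ 0 → v ≠ σ v → σ (σ v) ≠ v := by
    intro v hv hne hsq
    have hdvd := (hσ.pow_apply_eq (n := 2) ((hmem v).2 hv)).1 hsq
    rcases (Nat.dvd_prime Nat.prime_two).1 hdvd with h | h
    · exact hne ((hσ.pow_apply_eq (n := 1) ((hmem v).2 hv)).2 (dvd_of_eq h)).symm
    · exact hcard h
  refine hasSimpleModule_of_orientation hG {a | σ (G.s a) = G.t a} fun u v hu hv => ?_
  refine forall_mem_of_isCycleOn hσ ((hmem u).2 hu) .refl (fun w hw huw => ?_) v ((hmem v).2 hv)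
  replace hw := (hmem w).1 hw
  by_cases hne : w = σ w
  · rwa [← hne]
  refine huw.tail ⟨hw, hσd w hw, hne, ?_⟩
  obtain ⟨a, ⟨hs, ht⟩ | ⟨hs, ht⟩⟩ := hG.2 w (σ w) hne
  · exact ⟨a, .inl ⟨show σ (G.s a) = G.t a by rw [hs, ht], hs, ht⟩⟩
  · exact ⟨a, .inr ⟨show σ (G.s a) ≠ G.t a by rw [hs, ht]; exact hσσ w hw hne, hs, ht⟩⟩

theorem hasSimpleModule_of_two_arrows (hG : TotallyNegative G) {i j : G.V} (hij : i ≠ j)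
    (hsupp : ∀ v, d v ≠ 0 ↔ v = i ∨ v = j) {a b : G.E} (hab : a ≠ b)
    (ha : (G.s a = i ∧ G.t a = j) ∨ (G.s a = j ∧ G.t a = i))
    (hb : (G.s b = i ∧ G.t b = j) ∨ (G.s b = j ∧ G.t b = i)) : HasSimpleModule G d K := by
  have hi : d i ≠ 0 := (hsupp i).2 (.inl rfl)
  have hj : d j ≠ 0 := (hsupp j).2 (.inr rfl)
  let F : Set G.E := {e | (e = a ∧ G.s e = i) ∨ (e = b ∧ G.s e = j)}
  have hstep_ij : OrientedStep d F i j := by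
    refine ⟨hi, hj, hij, a, ha.imp (fun h => ⟨.inl ⟨rfl, h.1⟩, h⟩) fun h => ⟨?_, h⟩⟩
    rintro (⟨-, hs⟩ | ⟨hab', -⟩)
    exacts [hij (hs.symm.trans h.1), hab hab']
  have hstep_ji : OrientedStep d F j i := by
    refine ⟨hj, hi, hij.symm, b, hb.symm.imp (fun h => ⟨.inr ⟨rfl, h.1⟩, h⟩) fun h => ⟨?_, h⟩⟩
    rintro (⟨hba, -⟩ | ⟨-, hs⟩)
    exacts [hab hba.symm, hij (h.1.symm.trans hs)]
  exact hasSimpleModule_of_orientation hG F fun u v hu hv =>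
    reflTransGen_of_eq_or_eq hstep_ij hstep_ji ((hsupp u).1 hu) ((hsupp v).1 hv)

/-- The unit `E_{b₁ b₀}` contributed by `a` is cancelled at the loop carrying `E_{b₀ b₀}`, because
`[E_{b₀ b₀}, E_{b₁ b₀}] = -E_{b₁ b₀}` for `b₀ ≠ b₁`. -/
theorem hasSimpleModule_of_commutator_eq_single (hG : TotallyNegative G) {a : G.E}
    (ha : G.s a ≠ G.t a) (hsupp : ∀ v, d v ≠ 0 → v = G.s a ∨ v = G.t a) {x y : TotalMatrix d K}
    (hx : IsBlock (G.t a) (G.s a) x) (hy : IsBlock (G.s a) (G.t a) y) (hx0 : x ≠ 0) (hy0 : y ≠ 0)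
    {b₀ b₁ : Σ v, Fin (d v)} (hb₀ : (b₀.2 : ℕ) = 0) (hne : b₀ ≠ b₁) (hfst : b₁.1 = b₀.1) {r : K}
    (hxy : x * y - y * x = single b₁ b₀ r) : HasSimpleModule G d K := by
  classical
  have hL : ∀ e, IsBlock (G.t e) (G.s e) ((Pi.single a x : G.E → TotalMatrix d K) e) := by
    intro e
    by_cases he : e = a
    · subst he
      rwa [Pi.single_eq_same]
    · rw [Pi.single_eq_of_ne he]
      exact isBlock_zero
  obtain ⟨X, hX, hXL, hX₀, hunits⟩ := exists_extension_to_loops hG hL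
  obtain ⟨l, hls, hlt, hXl⟩ := hX₀ b₀ hb₀
  have hla : l ≠ a := by
    rintro rfl
    exact ha (hls.trans hlt.symm)
  have hXa : X a = x := (hXL a ha).trans (by rw [Pi.single_eq_same])
  let Y : G.E → TotalMatrix d K := fun e => if e = l then single b₁ b₀ r else if e = a then y else 0
  have hYl : Y l = single b₁ b₀ r := if_pos rfl
  have hYa : Y a = y := (if_neg hla.symm).trans (if_pos rfl)
  have hY : ∀ e, IsBlock (G.s e) (G.t e) (Y e) := fun e => by
    dsimp only [Y]
    split_ifs with h₁ h₂
    · rw [h₁, hls, hlt]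
      exact isBlock_single hfst rfl r
    · rwa [h₂]
    · exact isBlock_zero
  have hXYl : X l * Y l - Y l * X l = -single b₁ b₀ r := by
    rw [hXl, hYl, single_mul_single_of_ne _ _ _ _ hne, single_mul_single_same, mul_one, zero_sub]
  refine hasSimpleModule_of_link hX hY ?_ hunits fun u v hu hv =>
    reflTransGen_of_eq_or_eq ⟨a, .inl ⟨rfl, rfl, hXa ▸ hx0⟩⟩ ⟨a, .inr ⟨rfl, rfl, hYa ▸ hy0⟩⟩
      (hsupp u hu) (hsupp v hv)
  rw [Fintype.sum_eq_add l a hla fun e he => ?_]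
  · rw [hXYl, hXa, hYa, hxy, neg_add_cancel]
  · rw [show Y e = 0 from (if_neg he.1).trans (if_neg he.2), mul_zero, zero_mul, sub_zero]

theorem hasSimpleModule_of_two_le (hG : TotallyNegative G) {i j : G.V} (hij : i ≠ j)
    (hi : 2 ≤ d i) (hsupp : ∀ v, d v ≠ 0 ↔ v = i ∨ v = j) : HasSimpleModule G d K := by
  let b₀ : Σ v, Fin (d v) := ⟨i, 0, by omega⟩
  let b₁ : Σ v, Fin (d v) := ⟨i, 1, by omega⟩
  let c : Σ v, Fin (d v) := ⟨j, 0, Nat.pos_of_ne_zero ((hsupp j).2 (.inr rfl))⟩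
  have hne : b₀ ≠ b₁ := by simp [b₀, b₁]
  have hmul : (single b₁ c 1 : TotalMatrix d K) * single c b₀ 1 = single b₁ b₀ 1 := by
    rw [single_mul_single_same, mul_one]
  have hmul_rev : (single c b₀ 1 : TotalMatrix d K) * single b₁ c 1 = 0 :=
    single_mul_single_of_ne _ _ _ _ hne _
  have hsingle : ∀ b b' : Σ v, Fin (d v), (single b b' 1 : TotalMatrix d K) ≠ 0 := by
    intro b b' h
    simpa using congrFun₂ h b b'
  obtain ⟨a, ⟨rfl, rfl⟩ | ⟨rfl, rfl⟩⟩ := hG.2 i j hij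
  · refine hasSimpleModule_of_commutator_eq_single hG hij (fun v => (hsupp v).1)
      (isBlock_single rfl rfl 1) (isBlock_single rfl rfl 1) (hsingle c b₀) (hsingle b₁ c)
      rfl hne rfl (r := -1) ?_
    rw [hmul, hmul_rev, zero_sub, single_neg]
  · refine hasSimpleModule_of_commutator_eq_single hG hij.symm (fun v hv => ((hsupp v).1 hv).symm)
      (isBlock_single rfl rfl 1) (isBlock_single rfl rfl 1) (hsingle b₁ c) (hsingle c b₀)
      rfl hne rfl (r := 1) ?_
    rw [hmul, hmul_rev, sub_zero]

end FinQuiver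

open FinQuiver in
theorem exists_simple_preprojective_module_general {G : FinQuiver} {d : G.V → ℕ} {K : Type}
    [Field K] (hP : PropertyP G d) : HasSimpleModule G d K := by
  by_cases hcard : (Finset.univ.filter fun v => d v ≠ 0).card = 2
  swap
  · exact hasSimpleModule_of_card_support_ne_two hP.1 hcard
  obtain ⟨i, j, hij, hS⟩ := Finset.card_eq_two.1 hcard
  have hsupp : ∀ v, d v ≠ 0 ↔ v = i ∨ v = j := fun v => by simpa using Finset.ext_iff.1 hS v
  by_cases hi : 2 ≤ d i
  · exact hasSimpleModule_of_two_le hP.1 hij hi hsupp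
  by_cases hj : 2 ≤ d j
  · exact hasSimpleModule_of_two_le hP.1 hij.symm hj fun v => (hsupp v).trans or_comm
  have hi0 : d i ≠ 0 := (hsupp i).2 (.inl rfl)
  have hj0 : d j ≠ 0 := (hsupp j).2 (.inr rfl)
  have hlt : 1 < (Finset.univ.filter fun a : G.E =>
      (G.s a = i ∧ G.t a = j) ∨ (G.s a = j ∧ G.t a = i)).card := by
    obtain ⟨a, ha⟩ := hP.1.2 i j hij
    refine lt_of_le_of_ne (Finset.card_pos.2 ⟨a, by simpa using ha⟩) fun h =>
      hP.2 ⟨i, j, hij, Set.ext hsupp, h.symm, by omega, by omega⟩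
  obtain ⟨a, ha, b, hb, hab⟩ := Finset.one_lt_card.1 hlt
  exact hasSimpleModule_of_two_arrows hP.1 hij hsupp hab (Finset.mem_filter.1 ha).2
    (Finset.mem_filter.1 hb).2

/-- Let `K` be an algebraically closed field of characteristic zero,
`Q` a finite quiver and `d ∈ ℕ^{Q₀} ∖ {0}` such that `(Q,d)` has property (P).  Then
there exist matrices `x_a ∈ M_{d_{t(a)} × d_{s(a)}}(K)` and
`y_a ∈ M_{d_{s(a)} × d_{t(a)}}(K)` with `μ(x,y) = 0`, such that the only families of
subspaces `(W_i ⊆ K^{d_i})` invariant under all `x_a` and `y_a` are the zero family and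
the full family.  (There exists a simple `Π_Q`-module of dimension vector `d`.) -/
theorem exists_simple_preprojective_module (K : Type) [Field K] [IsAlgClosed K]
    [CharZero K] (G : FinQuiver) (d : G.V → ℕ) (hd : d ≠ 0) (hP : PropertyP G d) :
    ∃ (x : QRep G K d) (y : QCoRep G K d),
      (∀ i : G.V, momentMap G x y i = 0) ∧
      ∀ W : (i : G.V) → Submodule K (Fin (d i) → K),
        (∀ a : G.E, ∀ v ∈ W (G.s a), (x a).mulVec v ∈ W (G.t a)) →
        (∀ a : G.E, ∀ v ∈ W (G.t a), (y a).mulVec v ∈ W (G.s a)) →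
        (∀ i : G.V, W i = ⊥) ∨ (∀ i : G.V, W i = ⊤) :=
  exists_simple_preprojective_module_general hP
end

section
/- Let Q be a finite quiver, α ≥ 1, 𝔽_q a finite field, and R := 𝔽_q[t]/(t^α). Then #{ (x,y) ∈ R^{Q₁} × R^{Q₁} : for every i ∈ Q₀, Σ_{a : t(a)=i} x_a y_a = Σ_{a : s(a)=i} x_a y_a } = q^{α·#Q₁} · Σ over all partitions 𝒫 of Q₀ into nonempty parts of (1 − q^{−1})^{#Q₀ − #𝒫} · ∏_{I ∈ 𝒫} A_{(Q|_I,α),1̲}(q). (This is the rank-1̲ instance of the plethystic formula relating counts of jets on quiver moment-map fibres to Kac polynomials with multiplicities.) -/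
/-- The ring of truncated polynomials `F[t]/(t^α)`. -/
abbrev TruncRing (F : Type) [CommRing F] (α : ℕ) : Type :=
  Polynomial F ⧸ Ideal.span {(Polynomial.X : Polynomial F) ^ α}

/-- The image of `t` in `F[t]/(t^α)`. -/
noncomputable def tvar (F : Type) [CommRing F] (α : ℕ) : TruncRing F α :=
  Ideal.Quotient.mk _ (Polynomial.X : Polynomial F)
/-- The gauge relation on rank-`1̲` representations of the quiver `G` over the commutative
ring `R`: `x` and `y` are related iff they differ by the change-of-basis action of
`(Rˣ)^{Q₀}`, `(u·x)_a := u_{t(a)} x_a u_{s(a)}⁻¹`. -/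
def GaugeRel (G : FinQuiver) (R : Type) [CommRing R] (x y : G.E → R) : Prop :=
  ∃ u : G.V → Rˣ, ∀ a : G.E, y a = (u (G.t a) : R) * x a * ((u (G.s a))⁻¹ : Rˣ)

/-- `A_{(Q,α),1̲}(q)`: the number of orbits of tuples `x ∈ R^{Q₁}` whose support multigraph
(vertex set `Q₀`, edge set `{a | x_a ≠ 0}`) is connected, under the action of `(Rˣ)^{Q₀}`;
that is, the number of isomorphism classes of indecomposable locally free rank-`1̲`
representations of `Q` over `R`. -/
noncomputable def KacCount (G : FinQuiver) (R : Type) [CommRing R] : ℕ :=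
  Nat.card (Quot (fun x y : {x : G.E → R // (G.restrictE {a | x a ≠ 0}).Connected} =>
    GaugeRel G R x.1 y.1))

/-- `B_{(Q,α)}(q)`: the number of pairs `(x,y) ∈ R^{Q₁} × R^{Q₁}` satisfying the rank-`1̲`
moment map equations `∑_{a : t(a)=i} x_a y_a = ∑_{a : s(a)=i} x_a y_a` for every vertex `i`. -/
noncomputable def BCount (G : FinQuiver) (R : Type) [CommRing R] : ℕ :=
  Nat.card {xy : (G.E → R) × (G.E → R) //
    ∀ i : G.V, (∑ a : G.E, if G.t a = i then xy.1 a * xy.2 a else 0)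
             = ∑ a : G.E, if G.s a = i then xy.1 a * xy.2 a else 0}

/-!
For fixed `x` the moment map equations say that `y` lies in the kernel of a matrix `M x`, and
orthogonality of additive characters of `R` compares the kernel of a matrix with that of its
transpose. The transpose kernel of `M x` is the endomorphism algebra of the representation `x`, so
up to a power of `#R` one has to count pairs of a representation and an endomorphism of it.

Such pairs split over the connected components of the support of `x`, which produces the sum over
the partitions of `Q₀`. When the support is connected, reduction at a vertex is a surjective local
homomorphism from `End x` to the residue field of `R`, with `q` elements, so
`#Aut x = (1 - q⁻¹) * #End x`, and Burnside's lemma for the group `(Rˣ)^{Q₀}` turns the count of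
pairs into the count of orbits.
-/

section AdditiveCharacters

open Finset Matrix

variable {R K : Type*} [CommRing R] [CommRing K]

theorem isPrimitive_compAddMonoidHom {F : Type*} [CommRing F] [Algebra F R] {χ : AddChar F K}
    (hχ : χ.IsPrimitive) (lam : R →ₗ[F] F) (hlam : ∀ r, (∀ s, lam (r * s) = 0) → r = 0) :
    (χ.compAddMonoidHom lam.toAddMonoidHom).IsPrimitive := by
  intro r hr htriv
  obtain ⟨s, hs⟩ : ∃ s, lam (r * s) ≠ 0 := by
    by_contra! h
    exact hr (hlam r h)
  refine hχ hs (DFunLike.ext _ _ fun c => ?_)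
  have hshift := DFunLike.congr_fun htriv (c • s)
  rwa [AddChar.mulShift_apply, AddChar.compAddMonoidHom_apply, LinearMap.toAddMonoidHom_coe,
    mul_smul_comm, map_smul, smul_eq_mul, mul_comm] at hshift

variable [IsDomain K] {ψ : AddChar R K}

theorem sum_addChar_dotProduct [Fintype R] [DecidableEq R] {ι : Type*} [Fintype ι]
    [DecidableEq ι] (hψ : ψ.IsPrimitive) (b : ι → R) :
    ∑ y : ι → R, ψ (y ⬝ᵥ b) = if b = 0 then (Fintype.card R : K) ^ Fintype.card ι else 0 := by
  calc ∑ y : ι → R, ψ (y ⬝ᵥ b)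
      = ∑ y : ι → R, ∏ i, ψ (y i * b i) :=
        sum_congr rfl fun y _ =>
          map_prod ψ.toMonoidHom (fun i => Multiplicative.ofAdd (y i * b i)) univ
    _ = ∏ i, ∑ r, ψ (r * b i) := (Fintype.prod_sum fun i r => ψ (r * b i)).symm
    _ = ∏ i, ((if b i = 0 then Fintype.card R else 0 : ℕ) : K) := by
        simp only [AddChar.sum_mulShift _ hψ]
    _ = if b = 0 then (Fintype.card R : K) ^ Fintype.card ι else 0 := by
        simp only [Nat.cast_ite, Nat.cast_zero, funext_iff, Pi.zero_apply]
        rw [Finset.prod_ite_zero]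
        simp

/-- Both sides equal `∑ ψ (u ⬝ᵥ M *ᵥ y)` over all `u` and `y`. -/
theorem card_ker_mulVec_mul_card_pow [CharZero K] [Finite R] {m n : Type*} [Fintype m] [Fintype n]
    (hψ : ψ.IsPrimitive) (M : Matrix m n R) :
    Nat.card {y : n → R // M *ᵥ y = 0} * Nat.card R ^ Fintype.card m
      = Nat.card {u : m → R // u ᵥ* M = 0} * Nat.card R ^ Fintype.card n := by
  classical
  have := Fintype.ofFinite R
  have double_count : ∑ y : n → R, ∑ u : m → R, ψ (u ⬝ᵥ M *ᵥ y)
      = ∑ u : m → R, ∑ y : n → R, ψ (y ⬝ᵥ u ᵥ* M) := by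
    rw [sum_comm]
    simp only [dotProduct_mulVec, dotProduct_comm]
  simp only [sum_addChar_dotProduct hψ, ← sum_filter, sum_const, nsmul_eq_mul] at double_count
  simp only [Nat.card_eq_fintype_card, Fintype.card_subtype]
  exact_mod_cast double_count

end AdditiveCharacters

theorem card_units_of_surjective_of_isLocalHom {A k : Type*} [Ring A] [Finite A] [DivisionRing k]
    (f : A →+* k) [IsLocalHom f] (hf : Function.Surjective f) :
    (Nat.card Aˣ : ℚ) = (1 - (Nat.card k : ℚ)⁻¹) * Nat.card A := by
  classical
  have : Finite k := .of_surjective f hf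
  have card_ker : Nat.card {a // f a = 0} * Nat.card k = Nat.card A := by
    rw [← AddSubgroup.card_mul_index f.toAddMonoidHom.ker, AddSubgroup.index_ker,
      AddMonoidHom.range_eq_top.2 hf, AddSubgroup.card_top]
    rfl
  have card_units : Nat.card Aˣ = Nat.card {a // ¬ f a = 0} :=
    Nat.card_congr <| Submonoid.unitsTypeEquivIsUnitSubmonoid.toEquiv.trans <|
      Equiv.subtypeEquivRight fun a => (isUnit_map_iff f a).symm.trans isUnit_iff_ne_zero
  have card_compl : Nat.card A = Nat.card {a // f a = 0} + Nat.card {a // ¬ f a = 0} := by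
    rw [← Nat.card_sum, Nat.card_congr (Equiv.sumCompl fun a => f a = 0)]
  have card_k_ne : (Nat.card k : ℚ) ≠ 0 := Nat.cast_ne_zero.2 Nat.card_pos.ne'
  rw [← card_units] at card_compl
  have card_compl_rat : (Nat.card A : ℚ) = Nat.card {a // f a = 0} + Nat.card Aˣ := by
    exact_mod_cast card_compl
  have card_ker_rat : (Nat.card {a // f a = 0} : ℚ) = Nat.card A * (Nat.card k : ℚ)⁻¹ := by
    rw [eq_mul_inv_iff_mul_eq₀ card_k_ne]
    exact_mod_cast card_ker
  linear_combination -card_ker_rat - card_compl_rat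

theorem card_residueField_eq_of_surjective {A k : Type*} [CommRing A] [IsLocalRing A] [Field k]
    (f : A →+* k) [IsLocalHom f] (hf : Function.Surjective f) :
    Nat.card (IsLocalRing.ResidueField A) = Nat.card k :=
  Nat.card_congr <| Equiv.ofBijective (IsLocalRing.ResidueField.lift f)
    ⟨RingHom.injective _, fun c => (hf c).imp' (IsLocalRing.residue A) fun _ => id⟩

theorem one_sub_inv_card_residueField_ne_zero (A : Type*) [CommRing A] [IsLocalRing A] [Finite A] :
    1 - (Nat.card (IsLocalRing.ResidueField A) : ℚ)⁻¹ ≠ 0 := by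
  have : Finite (IsLocalRing.ResidueField A) := .of_surjective _ IsLocalRing.residue_surjective
  have one_lt_card : (1 : ℚ) < Nat.card (IsLocalRing.ResidueField A) := by
    exact_mod_cast Finite.one_lt_card
  exact (sub_pos.2 (inv_lt_one_of_one_lt₀ one_lt_card)).ne'

theorem card_sigma_stabilizer (M X : Type*) [Group M] [MulAction M X] :
    Nat.card (Σ x : X, MulAction.stabilizer M x)
      = Nat.card (MulAction.orbitRel.Quotient M X) * Nat.card M := by
  rw [← Nat.card_prod, ← Nat.card_congr (MulAction.sigmaFixedByEquivOrbitsProdGroup M X)]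
  exact Nat.card_congr
    { toFun := fun p => ⟨p.2.1, p.1, p.2.2⟩
      invFun := fun p => ⟨p.2.1, p.1, p.2.2⟩ }

section Components

open Finset

variable {V : Type*}

theorem eq_of_reachable_of_forall_adj {H : SimpleGraph V} {β : Type*} {f : V → β}
    (hf : ∀ v w, H.Adj v w → f v = f w) {v w : V} (hvw : H.Reachable v w) : f v = f w := by
  obtain ⟨walk⟩ := hvw
  induction walk with
  | nil => rfl
  | cons hadj _ ih => exact (hf _ _ hadj).trans ih

variable [Fintype V] [DecidableEq V]

theorem finpartition_ext_part {P P' : Finpartition (univ : Finset V)}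
    (h : ∀ v, P.part v = P'.part v) : P = P' := by
  have parts_eq (Q : Finpartition (univ : Finset V)) : Q.parts = univ.image Q.part := by
    ext I
    simp only [mem_image, mem_univ, true_and]
    refine ⟨fun hI => ?_, ?_⟩
    · obtain ⟨v, hv⟩ := Q.nonempty_of_mem_parts hI
      exact ⟨v, Q.part_eq_of_mem hI hv⟩
    · rintro ⟨v, rfl⟩
      exact Q.part_mem.2 (mem_univ v)
  exact Finpartition.ext (by rw [parts_eq P, parts_eq P', funext h])

open Classical in
/-- The partition of the vertices of a finite graph into its connected components. -/
noncomputable def componentPartition (H : SimpleGraph V) : Finpartition (univ : Finset V) :=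
  Finpartition.ofSetoid H.reachableSetoid

theorem mem_part_componentPartition {H : SimpleGraph V} {v w : V} :
    w ∈ (componentPartition H).part v ↔ H.Reachable v w := by
  classical
  exact Finpartition.mem_part_ofSetoid_iff_rel

theorem connected_induce_part_componentPartition (H : SimpleGraph V) (v : V) :
    (H.induce ((componentPartition H).part v : Set V)).Connected := by
  have part_eq_supp :
      ((componentPartition H).part v : Set V) = (H.connectedComponentMk v).supp := by
    ext w
    rw [mem_coe, mem_part_componentPartition, SimpleGraph.ConnectedComponent.mem_supp_iff,
      SimpleGraph.ConnectedComponent.eq, SimpleGraph.reachable_comm]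
  rw [part_eq_supp]
  exact (H.connectedComponentMk v).connected_toSimpleGraph

theorem componentPartition_eq_iff {H : SimpleGraph V} {P : Finpartition (univ : Finset V)} :
    componentPartition H = P ↔
      (∀ v w, H.Adj v w → P.part v = P.part w) ∧
        ∀ I ∈ P.parts, (H.induce (I : Set V)).Connected := by
  constructor
  · rintro rfl
    refine ⟨fun v w hvw => ?_, fun I hI => ?_⟩
    · rw [← Finpartition.mem_part_iff_part_eq_part _ (mem_univ v) (mem_univ w),
        mem_part_componentPartition]
      exact hvw.reachable.symm
    · obtain ⟨v, hv⟩ := Finpartition.nonempty_of_mem_parts _ hI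
      rw [← Finpartition.part_eq_of_mem _ hI hv]
      exact connected_induce_part_componentPartition H v
  · rintro ⟨hadj, hconn⟩
    refine finpartition_ext_part fun v => Finset.ext fun w => ?_
    rw [mem_part_componentPartition]
    constructor
    · intro hvw
      rw [eq_of_reachable_of_forall_adj hadj hvw]
      exact P.mem_part (mem_univ w)
    · intro hw
      exact ((hconn _ (P.part_mem.2 (mem_univ v))).preconnected
        ⟨v, P.mem_part (mem_univ v)⟩ ⟨w, hw⟩).map (SimpleGraph.Embedding.induce _).toHom

theorem sum_filter_isPartition_eq_sum_finpartition {M : Type*} [AddCommMonoid M]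
    (f : Finset (Finset V) → M)
    [DecidablePred fun P : Finset (Finset V) => (∀ I ∈ P, I.Nonempty) ∧
      (P : Set (Finset V)).PairwiseDisjoint id ∧ P.biUnion id = univ] :
    ∑ P ∈ univ.filter (fun P : Finset (Finset V) => (∀ I ∈ P, I.Nonempty) ∧
      (P : Set (Finset V)).PairwiseDisjoint id ∧ P.biUnion id = univ), f P
      = ∑ P : Finpartition (univ : Finset V), f P.parts := by
  symm
  refine sum_bij (fun P _ => P.parts) (fun P _ => ?_) (fun _ _ _ _ h => Finpartition.ext h)
    (fun P hP => ?_) (fun _ _ => rfl)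
  · exact mem_filter.2 ⟨mem_univ _, fun I => P.nonempty_of_mem_parts, P.disjoint, P.biUnion_parts⟩
  · obtain ⟨-, hne, hdisj, hcover⟩ := mem_filter.1 hP
    exact ⟨⟨P, supIndep_iff_pairwiseDisjoint.2 hdisj, by rwa [sup_eq_biUnion],
      fun h => not_nonempty_empty (hne _ h)⟩, mem_univ _, rfl⟩

end Components

namespace TruncRing

open Polynomial

section TopCoeff

variable {F : Type} [CommRing F] {α : ℕ}

/-- The coefficient of `t ^ (α - 1)`, a linear functional whose bilinear form `(r, s) ↦ λ(rs)` is
nondegenerate. -/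
noncomputable def topCoeff (hα : 1 ≤ α) : TruncRing F α →ₗ[F] F :=
  Submodule.liftQ ((Ideal.span {X ^ α}).restrictScalars F) (lcoeff F (α - 1)) (fun p hp => by
    obtain ⟨r, rfl⟩ := Ideal.mem_span_singleton'.1 hp
    rw [LinearMap.mem_ker, lcoeff_apply, coeff_mul_X_pow', if_neg (by omega)]) ∘ₗ
  (Submodule.Quotient.restrictScalarsEquiv F (Ideal.span {(X : F[X]) ^ α})).symm.toLinearMap

theorem topCoeff_mk (hα : 1 ≤ α) (p : F[X]) :
    topCoeff hα (Ideal.Quotient.mk _ p) = p.coeff (α - 1) := rfl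

theorem eq_zero_of_forall_topCoeff_mul_eq_zero (hα : 1 ≤ α) (r : TruncRing F α)
    (hr : ∀ s, topCoeff hα (r * s) = 0) : r = 0 := by
  obtain ⟨p, rfl⟩ := Ideal.Quotient.mk_surjective r
  rw [Ideal.Quotient.eq_zero_iff_mem, Ideal.mem_span_singleton, X_pow_dvd_iff]
  intro d hd
  have shifted_coeff := hr (Ideal.Quotient.mk _ (X ^ (α - 1 - d)))
  rwa [← map_mul, topCoeff_mk, coeff_mul_X_pow', if_pos (by omega),
    show α - 1 - (α - 1 - d) = d by omega] at shifted_coeff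

end TopCoeff

variable {F : Type} [Field F] {α : ℕ}

theorem exists_isPrimitive [Finite F] (hα : 1 ≤ α) :
    ∃ ψ : AddChar (TruncRing F α) ℂ, ψ.IsPrimitive :=
  ⟨_, isPrimitive_compAddMonoidHom (AddChar.FiniteField.primitiveChar_to_Complex_isPrimitive F)
    (topCoeff hα) (eq_zero_of_forall_topCoeff_mul_eq_zero hα)⟩

/-- The reduction modulo `t`. -/
noncomputable def constantCoeff (hα : 1 ≤ α) : TruncRing F α →+* F :=
  Ideal.Quotient.lift _ Polynomial.constantCoeff fun p hp => by
    obtain ⟨r, rfl⟩ := Ideal.mem_span_singleton'.1 hp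
    rw [constantCoeff_apply, coeff_mul_X_pow', if_neg (by omega)]

theorem constantCoeff_surjective (hα : 1 ≤ α) :
    Function.Surjective (constantCoeff (F := F) hα) := fun c =>
  ⟨Ideal.Quotient.mk _ (C c), coeff_C_zero⟩

theorem isLocalHom_constantCoeff (hα : 1 ≤ α) : IsLocalHom (constantCoeff (F := F) hα) where
  map_nonunit r hr := by
    obtain ⟨p, rfl⟩ := Ideal.Quotient.mk_surjective r
    have hp : p.coeff 0 ≠ 0 := hr.ne_zero
    have : (Ideal.span {(X : F[X])}).IsMaximal :=
      PrincipalIdealRing.isMaximal_of_irreducible irreducible_X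
    have hunit := Ideal.Quotient.isUnit_mk_pow_of_notMem (I := Ideal.span {(X : F[X])}) (n := α)
      fun hmem => hp (X_dvd_iff.1 (Ideal.mem_span_singleton.1 hmem))
    rwa [Ideal.span_singleton_pow] at hunit

theorem isLocalRing (hα : 1 ≤ α) : IsLocalRing (TruncRing F α) :=
  have := isLocalHom_constantCoeff (F := F) hα
  (constantCoeff hα).domain_isLocalRing

theorem card_residueField (hα : 1 ≤ α) [IsLocalRing (TruncRing F α)] :
    Nat.card (IsLocalRing.ResidueField (TruncRing F α)) = Nat.card F :=
  have := isLocalHom_constantCoeff (F := F) hα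
  card_residueField_eq_of_surjective _ (constantCoeff_surjective hα)

variable (F α)

theorem finite [Finite F] : Finite (TruncRing F α) := by
  have := (monic_X_pow (R := F) α).finite_quotient
  exact Module.finite_of_finite F

theorem card_eq : Nat.card (TruncRing F α) = Nat.card F ^ α := by
  have := (monic_X_pow (R := F) α).finite_quotient
  have := (monic_X_pow (R := F) α).free_quotient
  rw [Module.natCard_eq_pow_finrank (K := F), finrank_quotient_span_eq_natDegree, natDegree_X_pow]

end TruncRing

/-- Distributes dependent pairs over a dependent product. -/
def sigmaPiEquivPiSigma {ι : Type*} {α : ι → Type*} (β : ∀ i, α i → Type*) :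
    (Σ f : ∀ i, α i, ∀ i, β i (f i)) ≃ ∀ i, Σ a, β i a where
  toFun p i := ⟨p.1 i, p.2 i⟩
  invFun p := ⟨fun i => (p i).1, fun i => (p i).2⟩

namespace FinQuiver

open Finset Matrix

variable {G : FinQuiver}

/-- Glues functions on the parts of `P` to a function on all vertices. -/
def glueFun {β : Type*} (P : Finpartition (univ : Finset G.V))
    (u : ∀ I : P.parts, (G.restrictV (I : Set G.V)).V → β) (v : G.V) : β :=
  u ⟨P.part v, P.part_mem.2 (mem_univ v)⟩ ⟨v, P.mem_part (mem_univ v)⟩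

theorem glueFun_apply {β : Type*} (P : Finpartition (univ : Finset G.V))
    (u : ∀ I : P.parts, (G.restrictV (I : Set G.V)).V → β) (I : P.parts) (v : (I : Set G.V)) :
    glueFun P u v = u I v := by
  obtain ⟨I, hI⟩ := I
  obtain ⟨v, hv⟩ := v
  obtain rfl : P.part v = I := P.part_eq_of_mem hI hv
  rfl

section Support

variable {R : Type*} [Zero R]

/-- The simple graph underlying the support multigraph of `x`. -/
noncomputable def supportGraph (G : FinQuiver) {R : Type*} [Zero R] (x : G.E → R) :
    SimpleGraph G.V :=
  (G.restrictE {a | x a ≠ 0}).adjGraph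

theorem supportGraph_adj {x : G.E → R} {v w : G.V} :
    (G.supportGraph x).Adj v w ↔ v ≠ w ∧
      ((∃ a, x a ≠ 0 ∧ G.s a = v ∧ G.t a = w) ∨ ∃ a, x a ≠ 0 ∧ G.s a = w ∧ G.t a = v) := by
  refine (SimpleGraph.fromRel_adj _ _ _).trans (and_congr_right fun _ => or_congr ?_ ?_) <;>
    exact ⟨fun ⟨a, h⟩ => ⟨a.1, a.2, h⟩, fun ⟨a, ha, h⟩ => ⟨⟨a, ha⟩, h⟩⟩

theorem forall_supportGraph_adj_iff {x : G.E → R} {β : Type*} {f : G.V → β} :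
    (∀ v w, (G.supportGraph x).Adj v w → f v = f w) ↔
      ∀ a, x a ≠ 0 → f (G.s a) = f (G.t a) := by
  constructor
  · intro hf a ha
    by_cases hloop : G.s a = G.t a
    · rw [hloop]
    · exact hf _ _ (supportGraph_adj.2 ⟨hloop, .inl ⟨a, ha, rfl, rfl⟩⟩)
  · intro hf v w hvw
    obtain ⟨-, ⟨a, ha, rfl, rfl⟩ | ⟨a, ha, rfl, rfl⟩⟩ := supportGraph_adj.1 hvw
    · exact hf a ha
    · exact (hf a ha).symm

/-- The restriction of a rank-`1̲` representation of `Q` to the full subquiver on `I`. -/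
def restrictRep (I : Set G.V) (x : G.E → R) : (G.restrictV I).E → R := fun a => x a.1

theorem supportGraph_restrictRep (I : Set G.V) (x : G.E → R) :
    (G.restrictV I).supportGraph (restrictRep I x) = (G.supportGraph x).induce I := by
  have exists_arrow (v w : I) :
      (∃ a, restrictRep I x a ≠ 0 ∧ (G.restrictV I).s a = v ∧ (G.restrictV I).t a = w) ↔
        ∃ a, x a ≠ 0 ∧ G.s a = v ∧ G.t a = w := by
    constructor
    · rintro ⟨a, ha, hs, ht⟩
      exact ⟨a.1, ha, congrArg Subtype.val hs, congrArg Subtype.val ht⟩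
    · rintro ⟨a, ha, hs, ht⟩
      exact ⟨⟨a, hs ▸ v.2, ht ▸ w.2⟩, ha, Subtype.ext hs, Subtype.ext ht⟩
  ext v w
  exact supportGraph_adj.trans <| (and_congr (not_congr Subtype.ext_iff)
    (or_congr (exists_arrow v w) (exists_arrow w v))).trans supportGraph_adj.symm

/-- The rank-`1̲` representations of `Q` over `R` with connected support, i.e. the indecomposable
ones. -/
abbrev ConnRep (G : FinQuiver) (R : Type*) [Zero R] : Type _ :=
  {x : G.E → R // (G.supportGraph x).Connected}

theorem componentPartition_supportGraph_eq_iff {x : G.E → R}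
    {P : Finpartition (univ : Finset G.V)} :
    componentPartition (G.supportGraph x) = P ↔
      (∀ a, x a ≠ 0 → P.part (G.s a) = P.part (G.t a)) ∧
        ∀ I ∈ P.parts,
          ((G.restrictV (I : Set G.V)).supportGraph (restrictRep (I : Set G.V) x)).Connected := by
  rw [componentPartition_eq_iff, forall_supportGraph_adj_iff]
  simp only [supportGraph_restrictRep]
  rfl

/-- Glues representations of the subquivers on the parts of `P` by zero along the arrows joining
different parts. -/
def glueRep (P : Finpartition (univ : Finset G.V))
    (x : ∀ I : P.parts, (G.restrictV (I : Set G.V)).E → R) (a : G.E) : R :=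
  if h : G.t a ∈ P.part (G.s a) then
    x ⟨P.part (G.s a), P.part_mem.2 (mem_univ _)⟩ ⟨a, P.mem_part (mem_univ _), h⟩
  else 0

theorem restrictRep_glueRep (P : Finpartition (univ : Finset G.V))
    (x : ∀ I : P.parts, (G.restrictV (I : Set G.V)).E → R) (I : P.parts) :
    restrictRep (I : Set G.V) (glueRep P x) = x I := by
  funext a
  obtain ⟨I, hI⟩ := I
  obtain ⟨a, hs, ht⟩ := a
  obtain rfl : P.part (G.s a) = I := P.part_eq_of_mem hI hs
  exact dif_pos ht

theorem part_eq_part_of_glueRep_ne_zero {P : Finpartition (univ : Finset G.V)}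
    {x : ∀ I : P.parts, (G.restrictV (I : Set G.V)).E → R} {a : G.E} (ha : glueRep P x a ≠ 0) :
    P.part (G.s a) = P.part (G.t a) := by
  by_contra hst
  refine ha (dif_neg fun ht => hst ?_)
  exact ((P.mem_part_iff_part_eq_part (mem_univ _) (mem_univ _)).1 ht).symm

theorem glueRep_restrictRep {P : Finpartition (univ : Finset G.V)} {x : G.E → R}
    (hx : ∀ a, x a ≠ 0 → P.part (G.s a) = P.part (G.t a)) :
    glueRep P (fun I => restrictRep (I : Set G.V) x) = x := by
  funext a
  by_cases ht : G.t a ∈ P.part (G.s a)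
  · exact dif_pos ht
  · refine (dif_neg ht).trans (Eq.symm ?_)
    by_contra ha
    exact ht (hx a ha ▸ P.mem_part (mem_univ _))

/-- A representation is determined by its restrictions to the connected components of its
support. -/
def componentFiberEquiv (R : Type*) [Zero R] (P : Finpartition (univ : Finset G.V)) :
    {x : G.E → R // componentPartition (G.supportGraph x) = P} ≃
      ∀ I : P.parts, (G.restrictV (I : Set G.V)).ConnRep R where
  toFun x I := ⟨restrictRep _ x.1, (componentPartition_supportGraph_eq_iff.1 x.2).2 I.1 I.2⟩
  invFun x := ⟨glueRep P fun I => (x I).1, componentPartition_supportGraph_eq_iff.2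
    ⟨fun _ => part_eq_part_of_glueRep_ne_zero, fun I hI => by
      rw [restrictRep_glueRep P _ ⟨I, hI⟩]
      exact (x ⟨I, hI⟩).2⟩⟩
  left_inv x := Subtype.ext <|
    glueRep_restrictRep (componentPartition_supportGraph_eq_iff.1 x.2).1
  right_inv x := funext fun I => Subtype.ext (restrictRep_glueRep P (fun I => (x I).1) I)

end Support

section Endomorphisms

variable {R : Type*} [CommRing R]

/-- The endomorphism algebra of the rank-`1̲` representation `x`, inside `End(R^{Q₀}) = R^{Q₀}`. -/
def endAlgebra (x : G.E → R) : Subalgebra R (G.V → R) where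
  carrier := {u | ∀ a, SemiconjBy (x a) (u (G.s a)) (u (G.t a))}
  mul_mem' hu hv a := (hu a).mul_right (hv a)
  add_mem' hu hv a := (hu a).add_right (hv a)
  algebraMap_mem' _ _ := mul_comm _ _

theorem mem_endAlgebra {x : G.E → R} {u : G.V → R} :
    u ∈ endAlgebra x ↔ ∀ a, SemiconjBy (x a) (u (G.s a)) (u (G.t a)) :=
  Iff.rfl

theorem val_inv_mem_endAlgebra {x : G.E → R} {u : (G.V → R)ˣ} (hu : ↑u ∈ endAlgebra x) :
    ↑u⁻¹ ∈ endAlgebra x := fun a =>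
  SemiconjBy.units_inv_right (x := MulEquiv.piUnits u (G.s a)) (y := MulEquiv.piUnits u (G.t a))
    (hu a)

theorem isUnit_endAlgebra_iff {x : G.E → R} {u : endAlgebra x} :
    IsUnit u ↔ ∀ v, IsUnit (u.1 v) := by
  rw [← Pi.isUnit_iff]
  refine ⟨fun hu => hu.map (endAlgebra x).val, ?_⟩
  rintro ⟨u', hu'⟩
  have hmem : ↑u'⁻¹ ∈ endAlgebra x := val_inv_mem_endAlgebra (hu' ▸ u.2)
  refine IsUnit.of_mul_eq_one ⟨↑u'⁻¹, hmem⟩ (Subtype.ext ?_)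
  rw [MulMemClass.coe_mul, ← hu', Units.mul_inv, OneMemClass.coe_one]

theorem glueFun_mem_endAlgebra {x : G.E → R} {P : Finpartition (univ : Finset G.V)}
    (hx : ∀ a, x a ≠ 0 → P.part (G.s a) = P.part (G.t a))
    (u : ∀ I : P.parts, endAlgebra (restrictRep (I : Set G.V) x)) :
    glueFun P (fun I => (u I).1) ∈ endAlgebra x := by
  intro a
  by_cases ha : x a = 0
  · rw [ha]
    exact SemiconjBy.zero_left _ _
  · let I : P.parts := ⟨P.part (G.s a), P.part_mem.2 (mem_univ _)⟩
    have hs : G.s a ∈ (I : Set G.V) := P.mem_part (mem_univ _)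
    have ht : G.t a ∈ (I : Set G.V) := by
      change G.t a ∈ P.part (G.s a)
      rw [hx a ha]
      exact P.mem_part (mem_univ _)
    rw [glueFun_apply P _ I ⟨_, hs⟩, glueFun_apply P _ I ⟨_, ht⟩]
    exact (u I).2 ⟨a, hs, ht⟩

/-- An endomorphism of `x` is a family of endomorphisms of its restrictions to the parts of a
partition between which `x` vanishes. -/
def endAlgebraEquivPi {x : G.E → R} {P : Finpartition (univ : Finset G.V)}
    (hx : ∀ a, x a ≠ 0 → P.part (G.s a) = P.part (G.t a)) :
    endAlgebra x ≃ ∀ I : P.parts, endAlgebra (restrictRep (I : Set G.V) x) where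
  toFun u I := ⟨fun v => u.1 v.1, fun a => u.2 a.1⟩
  invFun u := ⟨glueFun P fun I => (u I).1, glueFun_mem_endAlgebra hx u⟩
  right_inv u := funext fun I => Subtype.ext <| funext fun v =>
    glueFun_apply P (fun I => (u I).1) I v

/-- The pairs of an indecomposable representation and an endomorphism of it. -/
abbrev ConnEnd (G : FinQuiver) (R : Type*) [CommRing R] : Type _ :=
  Σ x : G.ConnRep R, endAlgebra x.1

/-- A representation with component partition `P` and an endomorphism of it amount to an
indecomposable representation with an endomorphism on each part of `P`. -/
def componentFiberEndEquiv (R : Type*) [CommRing R] (P : Finpartition (univ : Finset G.V)) :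
    (Σ x : {x : G.E → R // componentPartition (G.supportGraph x) = P}, endAlgebra x.1) ≃
      ∀ I : P.parts, (G.restrictV (I : Set G.V)).ConnEnd R :=
  (Equiv.sigmaCongr (componentFiberEquiv R P) fun x =>
      endAlgebraEquivPi (componentPartition_supportGraph_eq_iff.1 x.2).1).trans
    (sigmaPiEquivPiSigma fun (I : P.parts) (x : (G.restrictV (I : Set G.V)).ConnRep R) =>
      endAlgebra x.1)

theorem card_sigma_endAlgebra_eq_sum (G : FinQuiver) (R : Type*) [CommRing R] [Finite R] :
    Nat.card (Σ x : G.E → R, endAlgebra x)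
      = ∑ P : Finpartition (univ : Finset G.V),
          ∏ I ∈ P.parts, Nat.card ((G.restrictV (I : Set G.V)).ConnEnd R) := by
  calc Nat.card (Σ x : G.E → R, endAlgebra x)
      = Nat.card (Σ P : Finpartition (univ : Finset G.V),
          Σ x : {x : G.E → R // componentPartition (G.supportGraph x) = P}, endAlgebra x.1) :=
        Nat.card_congr <| ((Equiv.sigmaFiberEquiv fun x : G.E → R =>
          componentPartition (G.supportGraph x)).sigmaCongrLeft.symm.trans
          (Equiv.sigmaAssoc fun P
            (x : {x : G.E → R // componentPartition (G.supportGraph x) = P}) => endAlgebra x.1))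
    _ = ∑ P : Finpartition (univ : Finset G.V),
          ∏ I : P.parts, Nat.card ((G.restrictV (I : Set G.V)).ConnEnd R) := by
        rw [Nat.card_sigma]
        exact sum_congr rfl fun P _ =>
          (Nat.card_congr (componentFiberEndEquiv R P)).trans
            (Nat.card_pi (β := fun I : P.parts => (G.restrictV (I : Set G.V)).ConnEnd R))
    _ = _ := sum_congr rfl fun P _ => prod_coe_sort P.parts
        fun I => Nat.card ((G.restrictV (I : Set G.V)).ConnEnd R)

end Endomorphisms

section MomentMap

variable {R : Type*} [CommRing R]

/-- The matrix of the linear map sending `y` to the value of the moment map at `(x, y)`. -/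
def momentMatrix (x : G.E → R) : Matrix G.V G.E R :=
  .of fun i a => (if G.t a = i then x a else 0) - if G.s a = i then x a else 0

theorem momentMatrix_mulVec_apply (x y : G.E → R) (i : G.V) :
    (momentMatrix x *ᵥ y) i = (∑ a, if G.t a = i then x a * y a else 0) -
      ∑ a, if G.s a = i then x a * y a else 0 := by
  simp only [mulVec, dotProduct, momentMatrix, of_apply, sub_mul, ite_mul, zero_mul,
    sum_sub_distrib]

theorem vecMul_momentMatrix_apply (x : G.E → R) (u : G.V → R) (a : G.E) :
    (u ᵥ* momentMatrix x) a = u (G.t a) * x a - u (G.s a) * x a := by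
  simp only [vecMul, dotProduct, momentMatrix, of_apply, mul_sub, mul_ite, mul_zero,
    sum_sub_distrib, sum_ite_eq, mem_univ, if_true]

theorem mem_endAlgebra_iff_vecMul_eq_zero {x : G.E → R} {u : G.V → R} :
    u ∈ endAlgebra x ↔ u ᵥ* momentMatrix x = 0 := by
  rw [mem_endAlgebra, funext_iff]
  refine forall_congr' fun a => ?_
  rw [vecMul_momentMatrix_apply, Pi.zero_apply, sub_eq_zero, SemiconjBy, mul_comm, eq_comm]

theorem BCount_mul_card_pow (G : FinQuiver) {R : Type} [CommRing R] [Finite R] {K : Type*}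
    [CommRing K] [IsDomain K] [CharZero K] {ψ : AddChar R K} (hψ : ψ.IsPrimitive) :
    BCount G R * Nat.card R ^ Fintype.card G.V
      = Nat.card (Σ x : G.E → R, endAlgebra x) * Nat.card R ^ Fintype.card G.E := by
  have BCount_eq : BCount G R = Nat.card (Σ x : G.E → R, {y // momentMatrix x *ᵥ y = 0}) := by
    refine Nat.card_congr <| (Equiv.subtypeEquivRight fun xy => ?_).trans
      (Equiv.subtypeProdEquivSigmaSubtype fun x y => momentMatrix x *ᵥ y = 0)
    simp only [funext_iff, momentMatrix_mulVec_apply, Pi.zero_apply, sub_eq_zero]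
  have := Fintype.ofFinite R
  classical
  rw [BCount_eq, Nat.card_sigma, Nat.card_sigma, sum_mul, sum_mul]
  refine sum_congr rfl fun x _ => ?_
  rw [card_ker_mulVec_mul_card_pow hψ]
  simp only [← mem_endAlgebra_iff_vecMul_eq_zero]

end MomentMap

section LocalEndomorphisms

variable {R : Type*} [CommRing R] [IsLocalRing R]

/-- The residue of an endomorphism of `x` at the vertex `v`. -/
noncomputable def residueAt (x : G.E → R) (v : G.V) : endAlgebra x →+* IsLocalRing.ResidueField R :=
  (IsLocalRing.residue R).comp ((Pi.evalRingHom (fun _ : G.V => R) v).comp (endAlgebra x).subtype)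

theorem residueAt_surjective (x : G.E → R) (v : G.V) : Function.Surjective (residueAt x v) := by
  intro k
  obtain ⟨r, rfl⟩ := IsLocalRing.residue_surjective k
  exact ⟨algebraMap R _ r, rfl⟩

theorem residue_eq_residue_of_mem_endAlgebra {x : G.E → R} {u : G.V → R} (hu : u ∈ endAlgebra x)
    {a : G.E} (ha : x a ≠ 0) :
    IsLocalRing.residue R (u (G.s a)) = IsLocalRing.residue R (u (G.t a)) := by
  rw [← sub_eq_zero, ← map_sub]
  by_contra hunit
  rw [← ne_eq, IsLocalRing.residue_ne_zero_iff_isUnit] at hunit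
  refine ha (hunit.mul_left_eq_zero.1 ?_)
  rw [mul_sub, (hu a).eq, mul_comm, sub_self]

/-- Residues of endomorphisms agree along the support, so one of them decides invertibility. -/
theorem isLocalHom_residueAt {x : G.E → R} (hx : (G.supportGraph x).Connected) (v : G.V) :
    IsLocalHom (residueAt x v) where
  map_nonunit u hu := isUnit_endAlgebra_iff.2 fun w => by
    have residue_eq : IsLocalRing.residue R (u.1 v) = IsLocalRing.residue R (u.1 w) :=
      eq_of_reachable_of_forall_adj (f := fun w => IsLocalRing.residue R (u.1 w))
        (forall_supportGraph_adj_iff.2 fun _ => residue_eq_residue_of_mem_endAlgebra u.2)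
        (hx.preconnected v w)
    rw [← IsLocalRing.residue_ne_zero_iff_isUnit, ← residue_eq]
    exact hu.ne_zero

theorem card_units_endAlgebra [Finite R] {x : G.E → R} (hx : (G.supportGraph x).Connected) :
    (Nat.card (endAlgebra x)ˣ : ℚ)
      = (1 - (Nat.card (IsLocalRing.ResidueField R) : ℚ)⁻¹) * Nat.card (endAlgebra x) := by
  obtain ⟨v⟩ := hx.nonempty
  have := isLocalHom_residueAt hx v
  exact card_units_of_surjective_of_isLocalHom _ (residueAt_surjective x v)

end LocalEndomorphisms

section GaugeAction

variable {R : Type*} [CommRing R]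

theorem supportGraph_units_mul_mul (x : G.E → R) (u w : G.E → Rˣ) :
    (G.supportGraph fun a => ↑(u a) * x a * ↑(w a)) = G.supportGraph x := by
  have support_eq : {a | ↑(u a) * x a * ↑(w a) ≠ 0} = {a | x a ≠ 0} :=
    Set.ext fun a => not_congr ((w a).mul_left_eq_zero.trans (u a).mul_right_eq_zero)
  rw [supportGraph, support_eq, supportGraph]

/-- The change-of-basis action of `(Rˣ)^{Q₀}` on indecomposable representations. -/
instance gaugeAction (G : FinQuiver) (R : Type*) [CommRing R] :
    MulAction (G.V → Rˣ) (G.ConnRep R) where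
  smul u x := ⟨fun a => u (G.t a) * x.1 a * ((u (G.s a))⁻¹ : Rˣ), by
    rw [supportGraph_units_mul_mul x.1 (fun a => u (G.t a)) fun a => (u (G.s a))⁻¹]
    exact x.2⟩
  one_smul x := Subtype.ext <| funext fun a =>
    show ↑(1 : Rˣ) * x.1 a * ↑(1⁻¹ : Rˣ) = x.1 a by simp
  mul_smul u w x := Subtype.ext <| funext fun a =>
    show ↑(u (G.t a) * w (G.t a)) * x.1 a * ↑(u (G.s a) * w (G.s a))⁻¹
      = u (G.t a) * (w (G.t a) * x.1 a * ↑(w (G.s a))⁻¹) * ↑(u (G.s a))⁻¹ by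
    rw [mul_inv, Units.val_mul, Units.val_mul]
    ring

theorem gauge_smul_eq_iff {u : G.V → Rˣ} {x y : G.ConnRep R} :
    u • x = y ↔ ∀ a, y.1 a = (u (G.t a) : R) * x.1 a * ((u (G.s a))⁻¹ : Rˣ) := by
  rw [Subtype.ext_iff, funext_iff]
  exact forall_congr' fun a => eq_comm

/-- The automorphisms of a representation are the units of its endomorphism algebra. -/
def stabilizerEquivUnitsEndAlgebra (x : G.ConnRep R) :
    MulAction.stabilizer (G.V → Rˣ) x ≃ (endAlgebra x.1)ˣ :=
  (Equiv.subtypeEquiv MulEquiv.piUnits.symm.toEquiv fun u => by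
    have smul_eq_iff_mem_endAlgebra : u • x = x ↔ (fun v => (u v : R)) ∈ endAlgebra x.1 := by
      simp only [gauge_smul_eq_iff, mem_endAlgebra, SemiconjBy, Units.eq_mul_inv_iff_mul_eq]
    rw [MulAction.mem_stabilizer_iff, smul_eq_iff_mem_endAlgebra]
    exact ⟨fun hu => Submonoid.mem_units_iff _ _ |>.2 ⟨hu, val_inv_mem_endAlgebra hu⟩,
      fun hu => (Submonoid.mem_units_iff _ _ |>.1 hu).1⟩).trans
    (endAlgebra x.1).toSubmonoid.unitsEquivUnitsType.toEquiv

theorem KacCount_eq_card_orbits (G : FinQuiver) (R : Type) [CommRing R] :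
    KacCount G R = Nat.card (MulAction.orbitRel.Quotient (G.V → Rˣ) (G.ConnRep R)) := by
  refine Nat.card_congr (Quot.congr (Equiv.refl _) fun (x y : G.ConnRep R) => ?_)
  change GaugeRel G R x.1 y.1 ↔ x ∈ MulAction.orbit (G.V → Rˣ) y
  rw [MulAction.mem_orbit_symm, MulAction.mem_orbit_iff]
  exact exists_congr fun u => (gauge_smul_eq_iff (x := x) (y := y)).symm

theorem KacCount_mul_card_units_pow (G : FinQuiver) (R : Type) [CommRing R] :
    KacCount G R * Nat.card Rˣ ^ Fintype.card G.V
      = Nat.card (Σ x : G.ConnRep R, (endAlgebra x.1)ˣ) := by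
  rw [← Nat.card_congr (Equiv.sigmaCongrRight stabilizerEquivUnitsEndAlgebra),
    card_sigma_stabilizer, KacCount_eq_card_orbits, Nat.card_fun,
    Nat.card_eq_fintype_card (α := G.V)]

theorem one_sub_inv_mul_card_connEnd (G : FinQuiver) (R : Type) [CommRing R] [IsLocalRing R]
    [Finite R] :
    (1 - (Nat.card (IsLocalRing.ResidueField R) : ℚ)⁻¹) * Nat.card (G.ConnEnd R)
      = ((1 - (Nat.card (IsLocalRing.ResidueField R) : ℚ)⁻¹) * Nat.card R) ^ Fintype.card G.V
        * KacCount G R := by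
  have := Fintype.ofFinite (G.ConnRep R)
  rw [← card_units_of_surjective_of_isLocalHom (IsLocalRing.residue R)
    IsLocalRing.residue_surjective, mul_comm (_ ^ _)]
  calc _ = ∑ x : G.ConnRep R, (Nat.card (endAlgebra x.1)ˣ : ℚ) := by
        rw [Nat.card_sigma, Nat.cast_sum, mul_sum]
        exact sum_congr rfl fun x _ => (card_units_endAlgebra x.2).symm
    _ = _ := by exact_mod_cast (Nat.card_sigma.symm.trans (G.KacCount_mul_card_units_pow R).symm)

end GaugeAction

section PlethysticFormula

variable {R : Type} [CommRing R] [IsLocalRing R] [Finite R]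

theorem prod_card_connEnd_eq (P : Finpartition (univ : Finset G.V)) :
    ∏ I ∈ P.parts, (Nat.card ((G.restrictV (I : Set G.V)).ConnEnd R) : ℚ)
      = (1 - (Nat.card (IsLocalRing.ResidueField R) : ℚ)⁻¹) ^ ((Fintype.card G.V : ℤ) - #P.parts)
        * (Nat.card R : ℚ) ^ Fintype.card G.V
        * ∏ I ∈ P.parts, (KacCount (G.restrictV (I : Set G.V)) R : ℚ) := by
  have hc := one_sub_inv_card_residueField_ne_zero R
  set c : ℚ := 1 - (Nat.card (IsLocalRing.ResidueField R) : ℚ)⁻¹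
  have card_connEnd_part (I : Finset G.V) :
      (Nat.card ((G.restrictV (I : Set G.V)).ConnEnd R) : ℚ)
        = c⁻¹ * ((c * Nat.card R) ^ #I * KacCount (G.restrictV (I : Set G.V)) R) := by
    have card_vertices : Fintype.card (G.restrictV (I : Set G.V)).V = #I := by
      rw [← Nat.card_eq_fintype_card]
      exact (Nat.card_eq_fintype_card (α := I)).trans (Fintype.card_coe I)
    rw [eq_inv_mul_iff_mul_eq₀ hc, ← card_vertices, one_sub_inv_mul_card_connEnd]
  have sum_card : ∑ I ∈ P.parts, #I = Fintype.card G.V := P.sum_card_parts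
  simp only [card_connEnd_part, prod_mul_distrib, prod_const, prod_pow_eq_pow_sum, sum_card]
  rw [zpow_sub₀ hc, zpow_natCast, zpow_natCast, mul_pow, inv_pow]
  ring

end PlethysticFormula

end FinQuiver

open FinQuiver Finset in
theorem plethystic_formula_rank_one_general (G : FinQuiver) {R : Type} [CommRing R]
    [IsLocalRing R] [Finite R] {K : Type*} [CommRing K] [IsDomain K] [CharZero K]
    {ψ : AddChar R K} (hψ : ψ.IsPrimitive) :
    (BCount G R : ℚ) = (Nat.card R : ℚ) ^ Fintype.card G.E *
      ∑ P : Finpartition (univ : Finset G.V),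
        (1 - (Nat.card (IsLocalRing.ResidueField R) : ℚ)⁻¹) ^
            ((Fintype.card G.V : ℤ) - #P.parts) *
          ∏ I ∈ P.parts, (KacCount (G.restrictV (I : Set G.V)) R : ℚ) := by
  have card_pow_ne_zero : (Nat.card R : ℚ) ^ Fintype.card G.V ≠ 0 :=
    pow_ne_zero _ (Nat.cast_ne_zero.2 Nat.card_pos.ne')
  refine mul_right_cancel₀ card_pow_ne_zero ?_
  calc (BCount G R : ℚ) * (Nat.card R : ℚ) ^ Fintype.card G.V
      = Nat.card (Σ x : G.E → R, endAlgebra x) * (Nat.card R : ℚ) ^ Fintype.card G.E := by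
        exact_mod_cast BCount_mul_card_pow G hψ
    _ = (∑ P : Finpartition (univ : Finset G.V), ∏ I ∈ P.parts,
          (Nat.card ((G.restrictV (I : Set G.V)).ConnEnd R) : ℚ)) *
            (Nat.card R : ℚ) ^ Fintype.card G.E := by
        exact_mod_cast congrArg (· * _) (card_sigma_endAlgebra_eq_sum G R)
    _ = _ := by
        simp only [prod_card_connEnd_eq, mul_sum, sum_mul]
        exact sum_congr rfl fun P _ => by ring

open Classical in
/-- the rank-`1̲` instance of the plethystic formula relating counts of
jets on quiver moment-map fibres to Kac polynomials with multiplicities.  Let `Q` be a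
finite quiver, `α ≥ 1`, `q` a prime power and `R := 𝔽_q[t]/(t^α)`.  Then
`B_{(Q,α)}(q) = q^{α·#Q₁} · Σ_𝒫 (1 − q⁻¹)^{#Q₀ − #𝒫} · ∏_{I ∈ 𝒫} A_{(Q|_I,α),1̲}(q)`,
the sum running over all partitions `𝒫` of `Q₀` into nonempty parts (encoded as finite
sets of pairwise disjoint nonempty subsets of `Q₀` covering `Q₀`). -/
theorem plethystic_formula_rank_one (G : FinQuiver) (α : ℕ) (hα : 1 ≤ α)
    (F : Type) [Field F] [Fintype F] :
    (BCount G (TruncRing F α) : ℚ)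
      = (Fintype.card F : ℚ) ^ (α * Fintype.card G.E) *
        ∑ P ∈ Finset.univ.filter (fun P : Finset (Finset G.V) =>
            (∀ I ∈ P, I.Nonempty) ∧ (↑P : Set (Finset G.V)).PairwiseDisjoint id ∧
            P.biUnion id = Finset.univ),
          (1 - (Fintype.card F : ℚ)⁻¹) ^ ((Fintype.card G.V : ℤ) - (P.card : ℤ)) *
            ∏ I ∈ P, (KacCount (G.restrictV (↑I : Set G.V)) (TruncRing F α) : ℚ) := by
  have := TruncRing.finite F α
  have := TruncRing.isLocalRing (F := F) hα
  obtain ⟨ψ, hψ⟩ := TruncRing.exists_isPrimitive (F := F) hα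
  rw [plethystic_formula_rank_one_general G hψ, TruncRing.card_eq, TruncRing.card_residueField hα,
    Nat.card_eq_fintype_card, Nat.cast_pow, pow_mul,
    sum_filter_isPartition_eq_sum_finpartition fun P : Finset (Finset G.V) =>
      (1 - (Fintype.card F : ℚ)⁻¹) ^ ((Fintype.card G.V : ℤ) - (P.card : ℤ)) *
        ∏ I ∈ P, (KacCount (G.restrictV (↑I : Set G.V)) (TruncRing F α) : ℚ)]
end

section
/- Let Q be a finite quiver with at least one arrow whose underlying multigraph is 2-connected, and let q be a prime power. For each proper nonempty subset E ⊊ Q₁ set d_E := b(Q) − b(Q|_E); each d_E ≥ 1, and b(Q) ≥ 1. Then the sequence α ↦ q^{−α·b(Q)} · A_{(Q,α),1̲}(q) converges as α → ∞, and its limit equals [ (1 − q^{−1})^{b(Q)} / (1 − q^{−b(Q)}) ] · Σ over all chains ∅ ⊊ E₁ ⊊ ⋯ ⊊ E_k ⊊ Q₁ of proper nonempty subsets of Q₁ (k ≥ 0, the empty chain contributing 1) of ∏_{j=1}^{k} q^{−d_{E_j}} / (1 − q^{−d_{E_j}}). -/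
/-- For a subset `E` of the edges, the exponent `d_E := b(Q) − b(Q|_E)`. -/
noncomputable def dExp (G : FinQuiver) (E : Finset G.E) : ℤ :=
  G.betti - (G.restrictE (↑E : Set G.E)).betti

/-!
Multiplying `A_{(Q,α),1̲}(q)` by the order of the gauge group turns it, by Burnside, into the sum of
the stabilizer sizes of the representations `x` with connected support. Expanding in powers of `t`,
the stabilizer of `x` has size `∏_{j ≤ α} q ^ c(Q|_{S_j})`, up to the factor `1 - q⁻¹` for each
component coming from units, where `S_1 ⊆ ⋯ ⊆ S_α` are the supports of `x` modulo `t, …, t ^ α`.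
So the rescaled count is an entry of the `α`-th power of a transfer matrix on the subsets of `Q₁`
applied to a fixed vector. Up to conjugation, this matrix has entry `q ^ (-d_T)` at each pair
`S ⊆ T` and `0` elsewhere; its diagonal is less than `1` except at `T = Q₁`, where `d_T = 0`.
Solving the recurrence downwards from `Q₁` yields the sum over chains.
-/

section AffineRecurrence

open Filter Topology

theorem tendsto_zero_of_le_mul_add {b e : ℕ → ℝ} {w : ℝ} (hw0 : 0 ≤ w) (hw1 : w < 1)
    (hb0 : ∀ n, 0 ≤ b n) (hb : ∀ n, b (n + 1) ≤ w * b n + e n) (he : Tendsto e atTop (𝓝 0)) :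
    Tendsto b atTop (𝓝 0) := by
  refine tendsto_order.2 ⟨fun ε hε => .of_forall fun n => hε.trans_le (hb0 n), fun ε hε => ?_⟩
  have threshold_pos : 0 < ε / 2 * (1 - w) := mul_pos (half_pos hε) (sub_pos.2 hw1)
  obtain ⟨N, hN⟩ := eventually_atTop.1 (he.eventually_lt_const threshold_pos)
  have geometric (m : ℕ) : b (m + N) - ε / 2 ≤ w ^ m * (b N - ε / 2) := by
    simpa using le_geom (u := fun k => b (k + N) - ε / 2) hw0 m fun k _ => by
      rw [add_right_comm]
      linarith [hb (k + N), hN (k + N) le_add_self]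
  have decay : Tendsto (fun m => w ^ m * (b N - ε / 2)) atTop (𝓝 0) := by
    simpa using (tendsto_pow_atTop_nhds_zero_of_lt_one hw0 hw1).mul_const (b N - ε / 2)
  rw [← map_add_atTop_eq_nat N, eventually_map]
  filter_upwards [decay.eventually_lt_const (half_pos hε)] with m hm
  linarith [geometric m]

theorem tendsto_of_affine_recurrence {𝕜 : Type*} [NormedField 𝕜] {a c : ℕ → 𝕜} {w l : 𝕜}
    (hw : ‖w‖ < 1) (ha : ∀ n, a (n + 1) = w * a n + c n) (hc : Tendsto c atTop (𝓝 l)) :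
    Tendsto a atTop (𝓝 (l / (1 - w))) := by
  have hw1 : 1 - w ≠ 0 := sub_ne_zero.2 fun h => by simp [← h] at hw
  have deviation (n : ℕ) : a (n + 1) - l / (1 - w) = w * (a n - l / (1 - w)) + (c n - l) := by
    rw [ha]
    field_simp
    ring
  rw [tendsto_iff_norm_sub_tendsto_zero] at hc ⊢
  refine tendsto_zero_of_le_mul_add (norm_nonneg w) hw (fun n => norm_nonneg _) (fun n => ?_) hc
  rw [deviation, ← norm_mul]
  exact norm_add_le _ _

end AffineRecurrence

section Chains

variable {α : Type*} [PartialOrder α] [OrderTop α] [LocallyFiniteOrder α]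

open Classical in
/-- The finite chains `t₁ < ⋯ < t_k` (`k ≥ 0`) of the open interval from `s` to `⊤`, each encoded
by its set of elements. They index the limit of the recurrence in `tendsto_of_Ici_recurrence`. -/
noncomputable def chainsAbove (s : α) : Finset (Finset α) :=
  {C ∈ (Finset.Ioo s ⊤).powerset | IsChain (· ≤ ·) (C : Set α)}

theorem mem_chainsAbove {s : α} {C : Finset α} :
    C ∈ chainsAbove s ↔ C ⊆ Finset.Ioo s ⊤ ∧ IsChain (· ≤ ·) (C : Set α) := by
  simp [chainsAbove]

theorem notMem_of_mem_chainsAbove {s : α} {C : Finset α} (hC : C ∈ chainsAbove s) : s ∉ C :=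
  fun hs => (Finset.mem_Ioo.1 ((mem_chainsAbove.1 hC).1 hs)).1.false

theorem insert_mem_chainsAbove [DecidableEq α] {s t : α} {C : Finset α} (ht : t ∈ Finset.Ioo s ⊤)
    (hC : C ∈ chainsAbove t) : insert t C ∈ chainsAbove s := by
  rw [mem_chainsAbove] at hC ⊢
  refine ⟨Finset.insert_subset ht fun u hu =>
    Finset.Ioo_subset_Ioo_left (Finset.mem_Ioo.1 ht).1.le (hC.1 hu), ?_⟩
  rw [Finset.coe_insert]
  exact hC.2.insert fun u hu _ => .inl (Finset.mem_Ioo.1 (hC.1 hu)).1.le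

theorem exists_insert_eq_of_mem_chainsAbove [DecidableEq α] {s : α} {C : Finset α}
    (hC : C ∈ chainsAbove s) (hne : C.Nonempty) :
    ∃ t ∈ Finset.Ioo s ⊤, ∃ D ∈ chainsAbove t, insert t D = C := by
  rw [mem_chainsAbove] at hC
  obtain ⟨t, htC, hmin⟩ := C.exists_minimal hne
  refine ⟨t, hC.1 htC, C.erase t, mem_chainsAbove.2 ⟨fun u hu => ?_, hC.2.mono (by simp)⟩,
    Finset.insert_erase htC⟩
  obtain ⟨hut, huC⟩ := Finset.mem_erase.1 hu
  have htu : t ≤ u := (hC.2 htC huC hut.symm).elim id fun h => hmin huC h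
  exact Finset.mem_Ioo.2 ⟨htu.lt_of_ne' hut, (Finset.mem_Ioo.1 (hC.1 huC)).2⟩

theorem insert_chainsAbove_injective [DecidableEq α] {t t' : α} {C C' : Finset α}
    (hC : C ∈ chainsAbove t) (hC' : C' ∈ chainsAbove t') (h : insert t C = insert t' C') :
    t = t' ∧ C = C' := by
  have le_of_mem_insert {r u : α} {D : Finset α} (hD : D ∈ chainsAbove r) (hu : u ∈ insert r D) :
      r ≤ u := by
    obtain rfl | hu := Finset.mem_insert.1 hu
    · exact le_rfl
    · exact (Finset.mem_Ioo.1 ((mem_chainsAbove.1 hD).1 hu)).1.le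
  obtain rfl : t = t' := le_antisymm (le_of_mem_insert hC (h ▸ Finset.mem_insert_self _ _))
    (le_of_mem_insert hC' (h ▸ Finset.mem_insert_self _ _))
  refine ⟨rfl, ?_⟩
  rw [← Finset.erase_insert (notMem_of_mem_chainsAbove hC), h,
    Finset.erase_insert (notMem_of_mem_chainsAbove hC')]

theorem sum_chainsAbove {M : Type*} [CommSemiring M] (g : α → M) (s : α) :
    ∑ C ∈ chainsAbove s, ∏ t ∈ C, g t
      = 1 + ∑ t ∈ Finset.Ioo s ⊤, g t * ∑ C ∈ chainsAbove t, ∏ u ∈ C, g u := by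
  classical
  have empty_mem : (∅ : Finset α) ∈ chainsAbove s := by simp [mem_chainsAbove]
  rw [← Finset.add_sum_erase _ _ empty_mem, Finset.prod_empty]
  simp_rw [Finset.mul_sum]
  rw [Finset.sum_sigma']
  congr 1
  symm
  refine Finset.sum_bij (fun p _ => insert p.1 p.2) ?_ ?_ ?_ ?_
  · rintro ⟨t, C⟩ h
    rw [Finset.mem_sigma] at h
    exact Finset.mem_erase.2 ⟨Finset.insert_ne_empty _ _, insert_mem_chainsAbove h.1 h.2⟩
  · rintro ⟨t, C⟩ h ⟨t', C'⟩ h' heq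
    rw [Finset.mem_sigma] at h h'
    obtain ⟨rfl, rfl⟩ := insert_chainsAbove_injective h.2 h'.2 heq
    rfl
  · intro C hC
    rw [Finset.mem_erase, ← Finset.nonempty_iff_ne_empty] at hC
    obtain ⟨t, ht, D, hD, rfl⟩ := exists_insert_eq_of_mem_chainsAbove hC.2 hC.1
    exact ⟨⟨t, D⟩, Finset.mem_sigma.2 ⟨ht, hD⟩, rfl⟩
  · rintro ⟨t, C⟩ h
    rw [Finset.mem_sigma] at h
    rw [Finset.prod_insert (notMem_of_mem_chainsAbove h.2)]

theorem sum_Ici_eq_add_add_sum_Ioo {M : Type*} [AddCommMonoid M] {s : α} (hs : s ≠ ⊤)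
    (f : α → M) : ∑ t ∈ Finset.Ici s, f t = f s + (f ⊤ + ∑ t ∈ Finset.Ioo s ⊤, f t) := by
  classical
  rw [← Finset.Icc_top, ← Finset.Ioc_insert_left le_top,
    ← Finset.Ioo_insert_right hs.lt_top, Finset.sum_insert (by simp [hs]),
    Finset.sum_insert (by simp)]

open Filter Topology

/-- The transfer matrix `w t` (`t ≥ s`) is triangular with diagonal `w`, so each `U n s` with
`s ≠ ⊤` contracts towards a limit determined by the limits strictly above `s`. -/
theorem tendsto_of_Ici_recurrence {𝕜 : Type*} [NormedField 𝕜] {w : α → 𝕜}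
    (hw : ∀ s, s ≠ ⊤ → ‖w s‖ < 1) (hw_top : w ⊤ = 1) {U : ℕ → α → 𝕜}
    (hU : ∀ n s, U (n + 1) s = ∑ t ∈ Finset.Ici s, w t * U n t) {s : α} (hs : s ≠ ⊤) :
    Tendsto (fun n => U n s) atTop
      (𝓝 (U 0 ⊤ / (1 - w s) * ∑ C ∈ chainsAbove s, ∏ t ∈ C, w t / (1 - w t))) := by
  have constant_top (n : ℕ) : U n ⊤ = U 0 ⊤ := by
    induction n with
    | zero => rfl
    | succ n ih => rw [hU, Finset.Ici_top, Finset.sum_singleton, hw_top, one_mul, ih]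
  induction hm : (Finset.Ioi s).card using Nat.strong_induction_on generalizing s with
  | h m ih =>
  have recurrence (n : ℕ) :
      U (n + 1) s = w s * U n s + (U 0 ⊤ + ∑ t ∈ Finset.Ioo s ⊤, w t * U n t) := by
    rw [hU, sum_Ici_eq_add_add_sum_Ioo hs, hw_top, one_mul, constant_top]
  have inhomogeneity := tendsto_finsetSum (Finset.Ioo s ⊤) fun t ht =>
    have ⟨hst, ht_top⟩ := Finset.mem_Ioo.1 ht
    (ih _ (hm ▸ Finset.card_lt_card (Finset.Ioi_ssubset_Ioi hst)) ht_top.ne rfl).const_mul (w t)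
  convert tendsto_of_affine_recurrence (a := fun n => U n s) (hw s hs) recurrence
    (inhomogeneity.const_add _) using 2
  rw [sum_chainsAbove, div_mul_eq_mul_div, mul_add, mul_one, Finset.mul_sum]
  congr 2
  refine Finset.sum_congr rfl fun t _ => ?_
  ring

end Chains

section Layers

variable {ι F : Type*} [Fintype ι] [Zero F] [DecidableEq F]

/-- The joint support of the layers `z 0, …, z (m - 1)` of `z`. For the coefficient layers of a
tuple over `F[t]/(t^n)`, it is the set of indices at which the tuple is nonzero modulo `t^m`. -/
def supportBelow {n : ℕ} (z : Fin n → ι → F) (m : ℕ) : Finset ι :=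
  {a | ∃ i : Fin n, i < m ∧ z i a ≠ 0}

theorem mem_supportBelow {n : ℕ} {z : Fin n → ι → F} {m : ℕ} {a : ι} :
    a ∈ supportBelow z m ↔ ∃ i : Fin n, i < m ∧ z i a ≠ 0 := by
  simp [supportBelow]

theorem supportBelow_zero {n : ℕ} (z : Fin n → ι → F) : supportBelow z 0 = ∅ := by
  ext a
  simp [mem_supportBelow]

variable [DecidableEq ι]

theorem card_filter_union_support_eq [Fintype F] {S T : Finset ι} (hST : S ⊆ T) :
    (Finset.univ.filter fun z : ι → F => S ∪ Finset.univ.filter (z · ≠ 0) = T).card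
      = Fintype.card F ^ S.card * (Fintype.card F - 1) ^ (T \ S).card := by
  let allowed (a : ι) : Finset F := if a ∈ S then .univ else if a ∈ T then .erase .univ 0 else {0}
  have card_allowed (a : ι) : (allowed a).card
      = (if a ∈ S then Fintype.card F else 1) * if a ∈ T \ S then Fintype.card F - 1 else 1 := by
    by_cases hS : a ∈ S
    · simp [allowed, hS]
    · by_cases hT : a ∈ T <;> simp [allowed, hS, hT, Finset.card_erase_of_mem]
  have filter_eq : Finset.univ.filter (fun z : ι → F => S ∪ Finset.univ.filter (z · ≠ 0) = T)
      = Fintype.piFinset allowed := by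
    ext z
    simp only [Finset.mem_filter, Finset.mem_univ, true_and, Fintype.mem_piFinset,
      Finset.ext_iff (s₂ := T), Finset.mem_union]
    refine forall_congr' fun a => ?_
    by_cases hS : a ∈ S
    · simp [allowed, hS, hST hS]
    · by_cases hT : a ∈ T <;> simp [allowed, hS, hT]
  rw [filter_eq, Fintype.card_piFinset]
  simp_rw [card_allowed]
  rw [Finset.prod_mul_distrib, Finset.prod_ite_mem, Finset.prod_ite_mem, Finset.univ_inter,
    Finset.univ_inter, Finset.prod_const, Finset.prod_const]

theorem sum_union_support [Fintype F] {M : Type*} [CommSemiring M] (f : Finset ι → M)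
    (S : Finset ι) :
    ∑ z : ι → F, f (S ∪ Finset.univ.filter (z · ≠ 0)) = ∑ T ∈ Finset.Ici S,
      (Fintype.card F : M) ^ S.card * ((Fintype.card F - 1 : ℕ) : M) ^ (T \ S).card * f T := by
  rw [← Finset.sum_fiberwise_of_maps_to (g := fun z : ι → F => S ∪ Finset.univ.filter (z · ≠ 0))
    (t := Finset.Ici S) fun z _ => Finset.mem_Ici.2 Finset.subset_union_left]
  refine Finset.sum_congr rfl fun T hT => ?_
  rw [Finset.sum_congr rfl (g := fun _ => f T) fun z hz => by rw [(Finset.mem_filter.1 hz).2],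
    Finset.sum_const, nsmul_eq_mul, card_filter_union_support_eq (Finset.mem_Ici.1 hT)]
  push_cast
  rfl

theorem supportBelow_cons_succ {n : ℕ} (z₀ : ι → F) (z : Fin n → ι → F) (m : ℕ) :
    supportBelow (Fin.cons z₀ z : Fin (n + 1) → ι → F) (m + 1)
      = Finset.univ.filter (z₀ · ≠ 0) ∪ supportBelow z m := by
  ext a
  simp [mem_supportBelow, Fin.exists_fin_succ]

variable (F) in
/-- The sum over all `n`-layered functions `z` of the product of the `v`-weights of the successive
joint supports, times the `h`-weight of the last one; all supports are enlarged by `S`, which makes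
the sum recursive in `n`. -/
def layerSum [Fintype F] {M : Type*} [CommSemiring M] (v h : Finset ι → M) (n : ℕ)
    (S : Finset ι) : M :=
  ∑ z : Fin n → ι → F, (∏ j : Fin n, v (S ∪ supportBelow z (j + 1))) * h (S ∪ supportBelow z n)

variable [Fintype F]

theorem layerSum_zero {M : Type*} [CommSemiring M] (v h : Finset ι → M) (S : Finset ι) :
    layerSum F v h 0 S = h S := by
  simp [layerSum, supportBelow_zero]

theorem layerSum_succ {M : Type*} [CommSemiring M] (v h : Finset ι → M) (n : ℕ) (S : Finset ι) :
    layerSum F v h (n + 1) S = ∑ T ∈ Finset.Ici S,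
      (Fintype.card F : M) ^ S.card * ((Fintype.card F - 1 : ℕ) : M) ^ (T \ S).card
        * (v T * layerSum F v h n T) := by
  rw [← sum_union_support (F := F) fun T => v T * layerSum F v h n T, layerSum,
    ← (Fin.consEquiv fun _ : Fin (n + 1) => ι → F).sum_comp, Fintype.sum_prod_type]
  refine Finset.sum_congr rfl fun z₀ _ => ?_
  rw [layerSum, Finset.mul_sum]
  refine Finset.sum_congr rfl fun z _ => ?_
  simp only [Fin.consEquiv, Equiv.coe_fn_mk, Fin.prod_univ_succ, supportBelow_cons_succ,
    Fin.val_zero, Fin.val_succ, supportBelow_zero, Finset.union_empty, Finset.union_assoc,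
    mul_assoc]

theorem layerSum_const_mul {M : Type*} [CommSemiring M] (κ : M) (v h : Finset ι → M) (n : ℕ)
    (S : Finset ι) : layerSum F (fun T => κ * v T) h n S = κ ^ n * layerSum F v h n S := by
  simp only [layerSum, Finset.prod_mul_distrib, Finset.prod_const, Finset.card_univ,
    Fintype.card_fin, mul_assoc, Finset.mul_sum]

open Filter Topology

/-- Scaling `layerSum` at `S` by `(1 - q⁻¹) ^ #S` turns the number of layers extending `S` to `T`
into `q ^ #T`, which depends on `T` only. -/
theorem tendsto_layerSum {w : Finset ι → ℝ} (hw : ∀ S, S ≠ ⊤ → ‖w S‖ < 1) (hw_top : w ⊤ = 1)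
    (h : Finset ι → ℝ) {S : Finset ι} (hS : S ≠ ⊤) :
    Tendsto (fun n => (1 - (Fintype.card F : ℝ)⁻¹) ^ S.card
        * layerSum F (fun T => w T / (Fintype.card F : ℝ) ^ T.card) h n S) atTop
      (𝓝 ((1 - (Fintype.card F : ℝ)⁻¹) ^ Fintype.card ι * h ⊤ / (1 - w S)
        * ∑ C ∈ chainsAbove S, ∏ T ∈ C, w T / (1 - w T))) := by
  have card_ne_zero : (Fintype.card F : ℝ) ≠ 0 := Nat.cast_ne_zero.2 Fintype.card_ne_zero
  have pred_card : ((Fintype.card F - 1 : ℕ) : ℝ)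
      = (1 - (Fintype.card F : ℝ)⁻¹) * (Fintype.card F : ℝ) := by
    rw [Nat.cast_pred Fintype.card_pos, sub_mul, one_mul, inv_mul_cancel₀ card_ne_zero]
  let U (n : ℕ) (S : Finset ι) : ℝ := (1 - (Fintype.card F : ℝ)⁻¹) ^ S.card
    * layerSum F (fun T => w T / (Fintype.card F : ℝ) ^ T.card) h n S
  have recurrence (n : ℕ) (S : Finset ι) : U (n + 1) S = ∑ T ∈ Finset.Ici S, w T * U n T := by
    simp only [U, layerSum_succ, Finset.mul_sum]
    refine Finset.sum_congr rfl fun T hT => ?_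
    rw [pred_card, mul_pow, ← Finset.card_sdiff_add_card_eq_card (Finset.mem_Ici.1 hT)]
    field_simp
    ring
  simpa only [U, layerSum_zero, Finset.top_eq_univ, Finset.card_univ] using
    tendsto_of_Ici_recurrence hw hw_top recurrence hS

end Layers

namespace FinQuiver

variable (G : FinQuiver)

/-- Functions on the vertices that agree at the two ends of each edge are functions on the set of
connected components. -/
def locallyConstantEquiv (T : Type*) :
    {f : G.V → T // ∀ a, f (G.t a) = f (G.s a)} ≃ (G.adjGraph.ConnectedComponent → T) where
  toFun f := SimpleGraph.ConnectedComponent.lift f.1 fun v w p _ => by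
    induction p with
    | nil => rfl
    | cons h _ ih =>
      rw [← ih (by simp_all)]
      obtain ⟨-, ⟨e, rfl, rfl⟩ | ⟨e, rfl, rfl⟩⟩ := (SimpleGraph.fromRel_adj _ _ _).1 h
      · exact (f.2 e).symm
      · exact f.2 e
  invFun g := ⟨fun v => g (G.adjGraph.connectedComponentMk v), fun a => by
    by_cases h : G.s a = G.t a
    · rw [h]
    · refine congrArg g (SimpleGraph.ConnectedComponent.sound (SimpleGraph.Adj.reachable ?_)).symm
      exact (SimpleGraph.fromRel_adj _ _ _).2 ⟨h, .inl ⟨a, rfl, rfl⟩⟩⟩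
  left_inv _ := rfl
  right_inv g := by
    funext C
    induction C using SimpleGraph.ConnectedComponent.ind with
    | _ v => rfl

theorem card_locallyConstant (T : Type*) (S : Set G.E) :
    Nat.card {f : G.V → T // ∀ a ∈ S, f (G.t a) = f (G.s a)} = Nat.card T ^ (G.restrictE S).c := by
  have : Finite (G.restrictE S).adjGraph.ConnectedComponent :=
    .of_surjective (G.restrictE S).adjGraph.connectedComponentMk Quot.mk_surjective
  rw [c, ← Nat.card_fun, ← Nat.card_congr ((G.restrictE S).locallyConstantEquiv T)]
  exact Nat.card_congr (Equiv.subtypeEquivRight fun f =>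
    ⟨fun h a => h a.1 a.2, fun h a ha => h ⟨a, ha⟩⟩)

/-- The `ZMod 2`-valued functions constant along `S` number `2 ^ c(S)`, and constancy along `T`
imposes at most `#T` further linear conditions. -/
theorem restrictE_c_le_union (S T : Set G.E) :
    (G.restrictE S).c ≤ (G.restrictE (S ∪ T)).c + T.ncard := by
  let K : AddSubgroup (G.V → ZMod 2) :=
    { carrier := {f | ∀ a ∈ S, f (G.t a) = f (G.s a)}
      add_mem' := fun hf hg a ha => congrArg₂ (· + ·) (hf a ha) (hg a ha)
      zero_mem' := fun _ _ => rfl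
      neg_mem' := fun hf a ha => congrArg (- ·) (hf a ha) }
  let δ : K →+ (T → ZMod 2) :=
    { toFun := fun f a => f.1 (G.t a) - f.1 (G.s a)
      map_zero' := funext fun _ => sub_self 0
      map_add' := fun _ _ => funext fun _ => add_sub_add_comm _ _ _ _ }
  have card_K : Nat.card K = 2 ^ (G.restrictE S).c :=
    (G.card_locallyConstant (ZMod 2) S).trans (by simp)
  have card_ker : Nat.card δ.ker = 2 ^ (G.restrictE (S ∪ T)).c := by
    have mem_union_iff (f : G.V → ZMod 2) : (∃ hf : f ∈ K, ⟨f, hf⟩ ∈ δ.ker)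
        ↔ ∀ a ∈ S ∪ T, f (G.t a) = f (G.s a) := by
      simp [K, δ, AddMonoidHom.mem_ker, funext_iff, sub_eq_zero, or_imp, forall_and]
    rw [Nat.card_congr ((Equiv.subtypeSubtypeEquivSubtypeExists _ _).trans
      (Equiv.subtypeEquivRight mem_union_iff)), G.card_locallyConstant, Nat.card_zmod]
  have card_range : Nat.card δ.range ≤ 2 ^ T.ncard := by
    have := Nat.card_le_card_of_injective _ δ.range.subtype_injective
    rwa [Nat.card_fun, Nat.card_zmod, Nat.card_coe_set_eq] at this
  rw [← Nat.pow_le_pow_iff_right one_lt_two, pow_add, ← card_K, ← card_ker,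
    ← δ.ker.card_mul_index, AddSubgroup.index_ker]
  exact Nat.mul_le_mul_left _ card_range

theorem restrictE_empty_c : (G.restrictE ∅).c = Fintype.card G.V := by
  have h := G.card_locallyConstant (ZMod 2) ∅
  rw [Nat.card_congr (Equiv.subtypeUnivEquiv (by simp)), Nat.card_fun, Nat.card_zmod,
    Nat.card_eq_fintype_card] at h
  exact (Nat.pow_right_injective le_rfl h).symm

theorem restrictE_univ_adjGraph : (G.restrictE Set.univ).adjGraph = G.adjGraph :=
  congrArg SimpleGraph.fromRel <| funext₂ fun _ _ =>
    propext (Equiv.Set.univ G.E).exists_congr_left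

theorem restrictE_univ_c : (G.restrictE Set.univ).c = G.c :=
  congrArg (fun H : SimpleGraph G.V => Nat.card H.ConnectedComponent) G.restrictE_univ_adjGraph

theorem restrictE_univ_connected : (G.restrictE Set.univ).Connected ↔ G.Connected :=
  iff_of_eq (congrArg (fun H : SimpleGraph G.V => H.Connected) G.restrictE_univ_adjGraph)

variable {G} in
theorem Connected.c_eq_one (h : G.Connected) : G.c = 1 := by
  have : Nonempty G.adjGraph.ConnectedComponent := h.nonempty.map G.adjGraph.connectedComponentMk
  have := h.preconnected.subsingleton_connectedComponent
  exact Nat.card_unique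

theorem restrictE_betti (S : Finset G.E) : (G.restrictE (S : Set G.E)).betti
    = (G.restrictE (S : Set G.E)).c - Fintype.card G.V + S.card := by
  have card_E : Fintype.card (G.restrictE (S : Set G.E)).E = S.card := by
    rw [← Fintype.card_coe S]
    exact Fintype.card_congr (Equiv.refl _)
  rw [betti, card_E]
  rfl

end FinQuiver

theorem dExp_eq (G : FinQuiver) (S : Finset G.E) :
    dExp G S = G.c + Fintype.card G.E - (G.restrictE (S : Set G.E)).c - S.card := by
  rw [dExp, G.restrictE_betti, FinQuiver.betti]
  ring

theorem dExp_empty (G : FinQuiver) : dExp G ∅ = G.betti := by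
  rw [dExp_eq, Finset.coe_empty, G.restrictE_empty_c, FinQuiver.betti, Finset.card_empty]
  ring

theorem dExp_univ (G : FinQuiver) : dExp G Finset.univ = 0 := by
  rw [dExp_eq, Finset.coe_univ, G.restrictE_univ_c, Finset.card_univ]
  ring

theorem one_le_dExp {G : FinQuiver} (h2 : G.TwoConnected) {S : Finset G.E}
    (hS : S ≠ Finset.univ) : 1 ≤ dExp G S := by
  classical
  obtain ⟨e, he⟩ : ∃ e, e ∉ S := by simpa [Finset.eq_univ_iff_forall] using hS
  have union_eq : (S : Set G.E) ∪ ((insert e S)ᶜ : Finset G.E) = {e}ᶜ := by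
    ext a
    by_cases ha : a = e <;> simp [ha, he, em]
  have c_compl : (G.restrictE {e}ᶜ).c = 1 := (h2.2 e).c_eq_one
  have c_le := G.restrictE_c_le_union S ((insert e S)ᶜ : Finset G.E)
  have card_compl := Finset.card_compl_add_card (insert e S)
  rw [union_eq, c_compl, Set.ncard_coe_finset] at c_le
  rw [Finset.card_insert_of_notMem he] at card_compl
  rw [dExp_eq, h2.1.c_eq_one]
  omega

theorem sum_card_stabilizer (M X : Type*) [Group M] [Finite M] [MulAction M X] [Fintype X] :
    ∑ x : X, Nat.card (MulAction.stabilizer M x)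
      = Nat.card (MulAction.orbitRel.Quotient M X) * Nat.card M := by
  rw [← Nat.card_prod, ← Nat.card_congr (MulAction.sigmaFixedByEquivOrbitsProdGroup M X),
    ← Nat.card_sigma]
  exact Nat.card_congr
    { toFun := fun p => ⟨p.2.1, p.1, p.2.2⟩
      invFun := fun p => ⟨p.2.1, p.1, p.2.2⟩ }

section Gauge

variable (G : FinQuiver) (R : Type) [CommRing R]

/-- The homomorphism through which the gauge group `(Rˣ)^{Q₀}` acts on `R^{Q₁}`. -/
def gaugeHom : (G.V → Rˣ) →* (G.E → Rˣ) where
  toFun u a := u (G.t a) / u (G.s a)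
  map_one' := funext fun _ => div_one _
  map_mul' _ _ := funext fun _ => mul_div_mul_comm _ _ _ _

/-- The gauge action `(u • x)_a = u_{t(a)} x_a u_{s(a)}⁻¹`, whose orbits are the classes of
`GaugeRel G R`. -/
abbrev gaugeAction : MulAction (G.V → Rˣ) (G.E → R) :=
  .compHom _ (gaugeHom G R)

attribute [local instance] gaugeAction

variable {G R}

theorem gauge_smul_apply (u : G.V → Rˣ) (x : G.E → R) (a : G.E) :
    (u • x) a = (u (G.t a) : R) * x a * ((u (G.s a))⁻¹ : Rˣ) := by
  change ((u (G.t a) / u (G.s a) : Rˣ) : R) * x a = _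
  rw [div_eq_mul_inv, Units.val_mul, mul_right_comm]

theorem mem_stabilizer_gauge_iff {u : G.V → Rˣ} {x : G.E → R} :
    u ∈ MulAction.stabilizer (G.V → Rˣ) x
      ↔ ∀ a, ((u (G.t a) : R) - u (G.s a)) * x a = 0 := by
  rw [MulAction.mem_stabilizer_iff, funext_iff]
  refine forall_congr' fun a => ?_
  rw [gauge_smul_apply, Units.mul_inv_eq_iff_eq_mul, sub_mul, sub_eq_zero, mul_comm (x a)]

variable (G R) in
/-- The representations with connected support, that is, the indecomposable ones. -/
def connectedReps : SubMulAction (G.V → Rˣ) (G.E → R) where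
  carrier := {x | (G.restrictE {a | x a ≠ 0}).Connected}
  smul_mem' u x hx := by
    have support_eq : {a | (u • x) a ≠ 0} = {a | x a ≠ 0} := by
      ext a
      simp [gauge_smul_apply]
    rwa [Set.mem_ofPred_eq, support_eq]

theorem kacCount_eq_card_orbits :
    KacCount G R = Nat.card (MulAction.orbitRel.Quotient (G.V → Rˣ) (connectedReps G R)) := by
  change Nat.card (Quot fun x y : connectedReps G R => GaugeRel G R x y) = _
  refine Nat.card_congr (Quot.congrRight fun x y => ?_)
  change _ ↔ x ∈ MulAction.orbit (G.V → Rˣ) y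
  rw [MulAction.mem_orbit_symm]
  refine exists_congr fun u => ?_
  simp only [Subtype.ext_iff, funext_iff, SubMulAction.val_smul, gauge_smul_apply, eq_comm]

open Classical in
theorem kacCount_mul_card_gauge [Finite R] [Fintype (G.E → R)] :
    KacCount G R * Nat.card (G.V → Rˣ)
      = ∑ x : G.E → R, if (G.restrictE {a | x a ≠ 0}).Connected
          then Nat.card (MulAction.stabilizer (G.V → Rˣ) x) else 0 := by
  rw [kacCount_eq_card_orbits, ← sum_card_stabilizer, ← Finset.sum_filter]
  simp_rw [SubMulAction.stabilizer_of_subMul]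
  exact (Finset.sum_subtype _ (p := (· ∈ connectedReps G R))
    (fun x => Finset.mem_filter_univ x) fun x => Nat.card (MulAction.stabilizer (G.V → Rˣ) x)).symm

end Gauge

section TruncatedCoefficients

open Polynomial

theorem X_pow_dvd_mul_iff {R : Type*} [Semiring R] [NoZeroDivisors R] {p q : R[X]} {n : ℕ} :
    X ^ n ∣ p * q ↔ ∀ i j, i + j < n → p.coeff i = 0 ∨ q.coeff j = 0 := by
  rw [X_pow_dvd_iff]
  refine ⟨fun h i j hij => ?_, fun h m hm => ?_⟩
  · by_contra! hne
    have trailing := h (p.natTrailingDegree + q.natTrailingDegree) <| by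
      grw [natTrailingDegree_le_of_ne_zero hne.1, natTrailingDegree_le_of_ne_zero hne.2]
      exact hij
    rw [coeff_mul_natTrailingDegree_add_natTrailingDegree, mul_eq_zero, trailingCoeff_eq_zero,
      trailingCoeff_eq_zero] at trailing
    rcases trailing with rfl | rfl
    · exact hne.1 rfl
    · exact hne.2 rfl
  · rw [coeff_mul]
    refine Finset.sum_eq_zero fun ij hij => mul_eq_zero.2 (h _ _ ?_)
    rwa [Finset.HasAntidiagonal.mem_antidiagonal.1 hij]

section CommRing

variable {F : Type} [CommRing F] {α : ℕ}

/-- The `i`-th coefficient of a truncated polynomial. -/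
noncomputable def truncCoeff (i : Fin α) : TruncRing F α →+ F :=
  QuotientAddGroup.lift _ (lcoeff F i).toAddMonoidHom fun _ hp =>
    X_pow_dvd_iff.1 (Ideal.mem_span_singleton.1 hp) i i.2

theorem truncCoeff_mk (i : Fin α) (p : F[X]) :
    truncCoeff i (Ideal.Quotient.mk _ p : TruncRing F α) = p.coeff i :=
  rfl

theorem truncRing_eq_zero_iff {r : TruncRing F α} : r = 0 ↔ ∀ i, truncCoeff i r = 0 := by
  obtain ⟨p, rfl⟩ := Ideal.Quotient.mk_surjective r
  simp_rw [truncCoeff_mk]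
  rw [Ideal.Quotient.eq_zero_iff_mem, Ideal.mem_span_singleton, X_pow_dvd_iff, Fin.forall_iff]

variable (F α) in
/-- A truncated polynomial is determined by its coefficients, which are arbitrary. -/
noncomputable def truncRingEquiv : TruncRing F α ≃ (Fin α → F) :=
  .ofBijective (fun r i => truncCoeff i r) <| by
    refine ⟨fun r s h => ?_, fun c => ⟨Ideal.Quotient.mk _ (∑ i : Fin α, monomial i (c i)), ?_⟩⟩
    · rw [← sub_eq_zero, truncRing_eq_zero_iff]
      exact fun i => (map_sub _ r s).trans (sub_eq_zero.2 (congrFun h i))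
    · funext i
      change truncCoeff i (Ideal.Quotient.mk _ _) = c i
      rw [truncCoeff_mk, finsetSum_coeff]
      simp [coeff_monomial, Fin.val_inj]

theorem truncRing_mul_eq_zero_iff [NoZeroDivisors F] {r s : TruncRing F α} :
    r * s = 0 ↔ ∀ i j : Fin α, (i + j : ℕ) < α → truncCoeff i r = 0 ∨ truncCoeff j s = 0 := by
  obtain ⟨p, rfl⟩ := Ideal.Quotient.mk_surjective r
  obtain ⟨q, rfl⟩ := Ideal.Quotient.mk_surjective s
  rw [← map_mul, Ideal.Quotient.eq_zero_iff_mem, Ideal.mem_span_singleton, X_pow_dvd_mul_iff]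
  exact ⟨fun h i j => h i j, fun h i j hij => h ⟨i, by omega⟩ ⟨j, by omega⟩ hij⟩

end CommRing

variable {F : Type} [Field F] {n : ℕ}

theorem truncRing_isUnit_iff {r : TruncRing F (n + 1)} : IsUnit r ↔ truncCoeff 0 r ≠ 0 := by
  obtain ⟨p, rfl⟩ := Ideal.Quotient.mk_surjective r
  have : (Ideal.span {(X : F[X])}).IsMaximal :=
    PrincipalIdealRing.isMaximal_of_irreducible irreducible_X
  have h := Ideal.Quotient.isUnit_mk_pow_iff_notMem (Ideal.span {(X : F[X])}) n.succ_ne_zero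
    (x := p)
  rwa [Ideal.span_singleton_pow, Ideal.mem_span_singleton, X_dvd_iff] at h

/-- The values allowed for the `i`-th coefficient of a unit. -/
abbrev UnitCoeff (F : Type) [Zero F] {n : ℕ} (i : Fin (n + 1)) : Type :=
  {y : F // i = 0 → y ≠ 0}

/-- The coefficients of a unit. -/
noncomputable def truncUnitsEquiv : (TruncRing F (n + 1))ˣ ≃ ∀ i : Fin (n + 1), UnitCoeff F i :=
  calc (TruncRing F (n + 1))ˣ
    _ ≃ {r : TruncRing F (n + 1) // IsUnit r} := Submonoid.unitsTypeEquivIsUnitSubmonoid.toEquiv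
    _ ≃ {c : Fin (n + 1) → F // ∀ i, i = 0 → c i ≠ 0} :=
      (truncRingEquiv F (n + 1)).subtypeEquiv fun r => by
        rw [truncRing_isUnit_iff, forall_eq]
        rfl
    _ ≃ ∀ i : Fin (n + 1), UnitCoeff F i :=
      Equiv.subtypePiEquivPi (p := fun (i : Fin (n + 1)) (y : F) => i = 0 → y ≠ 0)

theorem truncUnitsEquiv_apply (u : (TruncRing F (n + 1))ˣ) (i : Fin (n + 1)) :
    (truncUnitsEquiv u i : F) = truncCoeff i (u : TruncRing F (n + 1)) :=
  rfl

theorem card_unitCoeff [Fintype F] (i : Fin (n + 1)) : (Nat.card (UnitCoeff F i) : ℝ)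
    = Fintype.card F * if i = 0 then 1 - (Fintype.card F : ℝ)⁻¹ else 1 := by
  split_ifs with h
  · have card_ne_zero : (Fintype.card F : ℝ) ≠ 0 := Nat.cast_ne_zero.2 Fintype.card_ne_zero
    have equivUnits : UnitCoeff F i ≃ Fˣ :=
      (Equiv.subtypeEquivRight fun _ => forall_prop_of_true h).trans unitsEquivNeZero.symm
    rw [Nat.card_congr equivUnits, Nat.card_units, Nat.card_eq_fintype_card,
      Nat.cast_pred Fintype.card_pos, mul_one_sub, mul_inv_cancel₀ card_ne_zero]
  · have equivSelf : UnitCoeff F i ≃ F := Equiv.subtypeUnivEquiv fun _ hi => absurd hi h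
    rw [Nat.card_congr equivSelf, Nat.card_eq_fintype_card, mul_one]

end TruncatedCoefficients

section OrbitCount

attribute [local instance] gaugeAction

variable {G : FinQuiver} {F : Type} [Field F]

/-- The coefficient layers of a tuple of truncated polynomials. -/
noncomputable def layersEquiv (ι F : Type) [CommRing F] (α : ℕ) :
    (ι → TruncRing F α) ≃ (Fin α → ι → F) :=
  (Equiv.piCongrRight fun _ => truncRingEquiv F α).trans (Equiv.piComm fun _ _ => F)

theorem layersEquiv_apply {ι : Type} {α : ℕ} (x : ι → TruncRing F α) (i : Fin α) (a : ι) :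
    layersEquiv ι F α x i a = truncCoeff i (x a) :=
  rfl

variable {n : ℕ}

theorem card_gauge [Fintype F] :
    (Nat.card (G.V → (TruncRing F (n + 1))ˣ) : ℝ)
      = ((Fintype.card F : ℝ) ^ (n + 1) * (1 - (Fintype.card F : ℝ)⁻¹)) ^ Fintype.card G.V := by
  rw [Nat.card_fun, Nat.card_congr truncUnitsEquiv, Nat.card_pi, Nat.card_eq_fintype_card,
    Nat.cast_pow, Nat.cast_prod]
  simp_rw [card_unitCoeff, Finset.prod_mul_distrib]
  simp

variable [DecidableEq F]

theorem coe_supportBelow_layersEquiv {ι : Type} [Fintype ι] {α : ℕ} (x : ι → TruncRing F α) :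
    (supportBelow (layersEquiv ι F α x) α : Set ι) = {a | x a ≠ 0} := by
  ext a
  simp [mem_supportBelow, layersEquiv_apply, truncRing_eq_zero_iff]

theorem truncRing_mul_eq_zero_iff_supportBelow {ι : Type} [Fintype ι]
    {x : ι → TruncRing F (n + 1)} {r : TruncRing F (n + 1)} {a : ι} :
    r * x a = 0 ↔ ∀ k : Fin (n + 1),
      a ∈ supportBelow (layersEquiv ι F (n + 1) x) (k.rev + 1) → truncCoeff k r = 0 := by
  rw [truncRing_mul_eq_zero_iff]
  refine forall_congr' fun k => ?_
  simp only [mem_supportBelow, forall_exists_index, and_imp, layersEquiv_apply, Fin.val_rev]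
  refine forall_congr' fun i => ?_
  rw [or_iff_not_imp_right, show (k + i : ℕ) < n + 1 ↔ (i : ℕ) < n + 1 - (k + 1) + 1 by omega]

/-- Since `u` fixes `x` iff `(u_{t(a)} - u_{s(a)}) x_a = 0` for all arrows `a`, the `k`-th layer of
`u` must not distinguish the ends of the arrows in the support of `x` modulo `t^(n + 1 - k)`. -/
noncomputable def gaugeStabilizerEquiv (x : G.E → TruncRing F (n + 1)) :
    MulAction.stabilizer (G.V → (TruncRing F (n + 1))ˣ) x
      ≃ ∀ k : Fin (n + 1), {f : G.V → UnitCoeff F k //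
        ∀ a ∈ (supportBelow (layersEquiv G.E F (n + 1) x) (k.rev + 1) : Set G.E),
          f (G.t a) = f (G.s a)} :=
  let layers : (G.V → (TruncRing F (n + 1))ˣ) ≃ ∀ k : Fin (n + 1), G.V → UnitCoeff F k :=
    (Equiv.piCongrRight fun _ => truncUnitsEquiv).trans (Equiv.piComm fun _ k => UnitCoeff F k)
  let compatible (k : Fin (n + 1)) (f : G.V → UnitCoeff F k) : Prop :=
    ∀ a ∈ (supportBelow (layersEquiv G.E F (n + 1) x) (k.rev + 1) : Set G.E),
      f (G.t a) = f (G.s a)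
  calc ↥(MulAction.stabilizer (G.V → (TruncRing F (n + 1))ˣ) x)
    _ ≃ {f : ∀ k : Fin (n + 1), G.V → UnitCoeff F k // ∀ k, compatible k (f k)} :=
      layers.subtypeEquiv fun u => by
        simp_rw [mem_stabilizer_gauge_iff, truncRing_mul_eq_zero_iff_supportBelow, map_sub,
          sub_eq_zero, ← truncUnitsEquiv_apply, ← Subtype.ext_iff]
        exact forall_comm
    _ ≃ ∀ k, {f // compatible k f} := Equiv.subtypePiEquivPi (p := compatible)

variable [Fintype F]

theorem card_gaugeStabilizer (x : G.E → TruncRing F (n + 1)) :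
    (Nat.card (MulAction.stabilizer (G.V → (TruncRing F (n + 1))ˣ) x) : ℝ)
      = (∏ j : Fin (n + 1), (Fintype.card F : ℝ) ^ (G.restrictE
          (supportBelow (layersEquiv G.E F (n + 1) x) (j + 1) : Set G.E)).c)
        * (1 - (Fintype.card F : ℝ)⁻¹) ^ (G.restrictE {a | x a ≠ 0}).c := by
  simp_rw [Nat.card_congr (gaugeStabilizerEquiv x), Nat.card_pi, G.card_locallyConstant,
    Nat.cast_prod, Nat.cast_pow, card_unitCoeff, mul_pow, ite_pow, one_pow]
  rw [Finset.prod_mul_distrib, Finset.prod_ite_eq', ← Equiv.prod_comp Fin.revPerm]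
  simp [coe_supportBelow_layersEquiv]

variable (G F) in
open Classical in
/-- The factor with which a representation of support `S` enters Burnside's count of the
indecomposable ones: the stabilizer has one invertible constant coefficient per component. -/
noncomputable def indecomposableWeight (S : Finset G.E) : ℝ :=
  if (G.restrictE (S : Set G.E)).Connected
    then (1 - (Fintype.card F : ℝ)⁻¹) ^ (G.restrictE (S : Set G.E)).c else 0

variable [DecidableEq G.E]

theorem kacCount_mul_eq_layerSum :
    (KacCount G (TruncRing F (n + 1)) : ℝ)
        * ((Fintype.card F : ℝ) ^ (n + 1) * (1 - (Fintype.card F : ℝ)⁻¹)) ^ Fintype.card G.V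
      = layerSum F (fun S => (Fintype.card F : ℝ) ^ (G.restrictE (S : Set G.E)).c)
          (indecomposableWeight G F) (n + 1) ∅ := by
  classical
  have : Finite (TruncRing F (n + 1)) := .of_equiv _ (truncRingEquiv F (n + 1)).symm
  have : Fintype (G.E → TruncRing F (n + 1)) := .ofFinite _
  rw [← card_gauge, ← Nat.cast_mul, kacCount_mul_card_gauge, layerSum,
    ← (layersEquiv G.E F (n + 1)).sum_comp, Nat.cast_sum]
  refine Finset.sum_congr rfl fun x _ => ?_
  rw [Nat.cast_ite, card_gaugeStabilizer, Nat.cast_zero, Finset.empty_union,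
    indecomposableWeight, coe_supportBelow_layersEquiv, mul_ite, mul_zero]
  simp only [Finset.empty_union]

theorem rescaled_kacCount_eq_layerSum :
    (Fintype.card F : ℝ) ^ (-((n + 1 : ℕ) : ℤ) * G.betti) * KacCount G (TruncRing F (n + 1))
        * (1 - (Fintype.card F : ℝ)⁻¹) ^ Fintype.card G.V
      = layerSum F (fun S => (Fintype.card F : ℝ) ^ (-dExp G S) / (Fintype.card F : ℝ) ^ S.card)
          (indecomposableWeight G F) (n + 1) ∅ := by
  have card_ne_zero : (Fintype.card F : ℝ) ≠ 0 := Nat.cast_ne_zero.2 Fintype.card_ne_zero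
  have weight_eq (S : Finset G.E) :
      (Fintype.card F : ℝ) ^ (-dExp G S) / (Fintype.card F : ℝ) ^ S.card
        = (Fintype.card F : ℝ) ^ (-(G.c + Fintype.card G.E) : ℤ)
          * (Fintype.card F : ℝ) ^ (G.restrictE (S : Set G.E)).c := by
    rw [← zpow_natCast, ← zpow_natCast, ← zpow_sub₀ card_ne_zero, ← zpow_add₀ card_ne_zero,
      dExp_eq]
    congr 1
    ring
  have scale_eq : (Fintype.card F : ℝ) ^ (-((n + 1 : ℕ) : ℤ) * G.betti)
      = ((Fintype.card F : ℝ) ^ (-(G.c + Fintype.card G.E) : ℤ)) ^ (n + 1)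
        * ((Fintype.card F : ℝ) ^ (n + 1)) ^ Fintype.card G.V := by
    rw [← pow_mul, ← zpow_natCast, ← zpow_natCast, ← zpow_mul, ← zpow_add₀ card_ne_zero,
      FinQuiver.betti]
    congr 1
    push_cast
    ring
  simp_rw [weight_eq]
  rw [layerSum_const_mul, ← kacCount_mul_eq_layerSum, scale_eq, mul_pow]
  ring

end OrbitCount

section Limit

open Classical in
theorem filter_isChain_eq_chainsAbove_empty {ι : Type*} [Fintype ι] :
    Finset.univ.filter (fun C : Finset (Finset ι) =>
      (∀ E ∈ C, E.Nonempty ∧ E ≠ Finset.univ) ∧ IsChain (· ⊆ ·) (C : Set (Finset ι)))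
      = chainsAbove ∅ := by
  ext C
  rw [Finset.mem_filter_univ, mem_chainsAbove]
  refine and_congr (forall₂_congr fun E _ => ?_) Iff.rfl
  simp [Finset.empty_ssubset, Finset.ssubset_univ_iff]

open Filter Topology

open Classical in
theorem tendsto_kacCount {G : FinQuiver} [Nonempty G.E] (h2 : G.TwoConnected) (F : Type) [Field F]
    [Fintype F] :
    Tendsto (fun α : ℕ =>
        (Fintype.card F : ℝ) ^ (-(α : ℤ) * G.betti) * KacCount G (TruncRing F α)) atTop
      (𝓝 ((1 - (Fintype.card F : ℝ)⁻¹) ^ G.betti / (1 - (Fintype.card F : ℝ) ^ (-G.betti))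
        * ∑ C ∈ chainsAbove ∅, ∏ S ∈ C,
          (Fintype.card F : ℝ) ^ (-dExp G S) / (1 - (Fintype.card F : ℝ) ^ (-dExp G S)))) := by
  have one_lt_card : 1 < (Fintype.card F : ℝ) := Nat.one_lt_cast.2 Fintype.one_lt_card
  have r_ne_zero : 1 - (Fintype.card F : ℝ)⁻¹ ≠ 0 :=
    (sub_pos.2 (inv_lt_one_of_one_lt₀ one_lt_card)).ne'
  have weight_lt_one (S : Finset G.E) (hS : S ≠ ⊤) : ‖(Fintype.card F : ℝ) ^ (-dExp G S)‖ < 1 := by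
    rw [Real.norm_of_nonneg (by positivity)]
    exact zpow_lt_one_of_neg₀ one_lt_card (by linarith [one_le_dExp h2 hS])
  have weight_top : (Fintype.card F : ℝ) ^ (-dExp G ⊤) = 1 := by
    rw [Finset.top_eq_univ, dExp_univ, neg_zero, zpow_zero]
  have connected_top : (G.restrictE ((⊤ : Finset G.E) : Set G.E)).Connected := by
    rw [Finset.top_eq_univ, Finset.coe_univ, G.restrictE_univ_connected]
    exact h2.1
  have limit := ((tendsto_add_atTop_iff_nat 1).2 (tendsto_layerSum (F := F) weight_lt_one
    weight_top (indecomposableWeight G F) Finset.univ_nonempty.ne_empty.symm)).div_const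
      ((1 - (Fintype.card F : ℝ)⁻¹) ^ Fintype.card G.V)
  rw [← tendsto_add_atTop_iff_nat 1]
  convert limit using 2 with n
  · rw [← rescaled_kacCount_eq_layerSum, Finset.card_empty, pow_zero, one_mul,
      mul_div_cancel_right₀ _ (pow_ne_zero _ r_ne_zero)]
  · have r_pow_betti : (1 - (Fintype.card F : ℝ)⁻¹) ^ G.betti
        = (1 - (Fintype.card F : ℝ)⁻¹) ^ Fintype.card G.E * (1 - (Fintype.card F : ℝ)⁻¹) ^ G.c
          / (1 - (Fintype.card F : ℝ)⁻¹) ^ Fintype.card G.V := by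
      rw [FinQuiver.betti, zpow_add₀ r_ne_zero, zpow_sub₀ r_ne_zero, zpow_natCast, zpow_natCast,
        zpow_natCast]
      ring
    rw [indecomposableWeight, if_pos connected_top, connected_top.c_eq_one, dExp_empty,
      r_pow_betti, h2.1.c_eq_one]
    ring

end Limit

open Classical in
/-- Let `Q` be a finite quiver with at least one arrow whose underlying
multigraph is 2-connected, and `q` a prime power.  For each proper nonempty `E ⊊ Q₁` set
`d_E := b(Q) − b(Q|_E)`; each `d_E ≥ 1`, and `b(Q) ≥ 1`.  Then the sequence
`α ↦ q^{−α·b(Q)} · A_{(Q,α),1̲}(q)` converges as `α → ∞`, and its limit equals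
`[(1 − q⁻¹)^{b(Q)}/(1 − q^{−b(Q)})] · Σ_chains ∏_j q^{−d_{E_j}}/(1 − q^{−d_{E_j}})`,
the sum running over all chains `∅ ⊊ E₁ ⊊ ⋯ ⊊ E_k ⊊ Q₁` of proper nonempty subsets of
`Q₁` (`k ≥ 0`, the empty chain contributing `1`; a chain is encoded by its underlying
finite set of subsets). -/
theorem kac_limit_formula (G : FinQuiver) (hE : Nonempty G.E) (h2 : G.TwoConnected)
    (F : Type) [Field F] [Fintype F] :
    (∀ E : Finset G.E, E.Nonempty → E ≠ Finset.univ → 1 ≤ dExp G E) ∧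
    1 ≤ G.betti ∧
    Filter.Tendsto (fun α : ℕ =>
        (Fintype.card F : ℝ) ^ (-(α : ℤ) * G.betti) * (KacCount G (TruncRing F α) : ℝ))
      Filter.atTop
      (nhds ((1 - (Fintype.card F : ℝ)⁻¹) ^ G.betti
          / (1 - (Fintype.card F : ℝ) ^ (-G.betti)) *
        ∑ C ∈ Finset.univ.filter (fun C : Finset (Finset G.E) =>
            (∀ E ∈ C, E.Nonempty ∧ E ≠ Finset.univ) ∧
            IsChain (· ⊆ ·) (↑C : Set (Finset G.E))),
          ∏ E ∈ C, (Fintype.card F : ℝ) ^ (-(dExp G E))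
            / (1 - (Fintype.card F : ℝ) ^ (-(dExp G E))))) := by
  refine ⟨fun E _ hE => one_le_dExp h2 hE, ?_, ?_⟩
  · rw [← dExp_empty]
    exact one_le_dExp h2 Finset.univ_nonempty.ne_empty.symm
  · rw [filter_isChain_eq_chainsAbove_empty]
    exact tendsto_kacCount h2 F
end
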